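/- arXiv:1312.2185 — 10 statements merged into one kernel-verified Lean document; each statement's English description precedes it below -/
import Mathlib

section
/- There is an absolute constant C such that every path-restricted ordered bipartite graph G = (U, V, E) with n = |U| + |V| vertices (n ≥ 2) has at most n·log₂ n + C·n edges. -/
open List

/-- Adjacency relation of the bipartite graph with edge set `E ⊆ U × V`,
on the disjoint union of the two sides. -/
def BipAdj {α β : Type*} (E : Set (α × β)) : (α ⊕ β) → (α ⊕ β) → Prop
  | Sum.inl u, Sum.inr v => (u, v) ∈ E
  | Sum.inr v, Sum.inl u => (u, v) ∈ E
  | _, _ => False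

/-- The `U`-vertices visited by a walk, in order of traversal. -/
def uVerts {α β : Type*} (ws : List (α ⊕ β)) : List α := ws.filterMap Sum.getLeft?

/-- The `V`-vertices visited by a walk, in order of traversal. -/
def vVerts {α β : Type*} (ws : List (α ⊕ β)) : List β := ws.filterMap Sum.getRight?

/-- A (nonempty, simple) path in the bipartite graph with edge set `E`. -/
def IsPathList {α β : Type*} (E : Set (α × β)) (ws : List (α ⊕ β)) : Prop :=
  ws ≠ [] ∧ ws.Chain' (BipAdj E) ∧ ws.Nodup

/-- A forward path: a path whose `U`-vertices and `V`-vertices are both visited in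
strictly increasing order, or both in strictly decreasing order. -/
def IsForwardPath {α β : Type*} [Preorder α] [Preorder β]
    (E : Set (α × β)) (ws : List (α ⊕ β)) : Prop :=
  IsPathList E ws ∧
    (((uVerts ws).Chain' (· < ·) ∧ (vVerts ws).Chain' (· < ·)) ∨
      ((uVerts ws).Chain' (· > ·) ∧ (vVerts ws).Chain' (· > ·)))

/-- The internal (degree-two) vertices of a path: all but the two endpoints. -/
def internalVerts {α β : Type*} (ws : List (α ⊕ β)) : List (α ⊕ β) := (ws.drop 1).dropLast

/-- `x` is a least element of the list `l`. -/
def ListLeast {γ : Type*} [Preorder γ] (l : List γ) (x : γ) : Prop :=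
  x ∈ l ∧ ∀ y ∈ l, x ≤ y

/-- `x` is a greatest element of the list `l`. -/
def ListGreatest {γ : Type*} [Preorder γ] (l : List γ) (x : γ) : Prop :=
  x ∈ l ∧ ∀ y ∈ l, y ≤ x

/-- The forward path `ws` has a back edge: an edge of `G` joining the smallest
`U`-vertex `u_a` of `ws` to a vertex `v_j ∈ [v_c, v_d]` strictly greater than the smallest
internal `V`-vertex of `ws`, or an edge joining the smallest `V`-vertex `v_c` of `ws` to a
vertex `u_i ∈ [u_a, u_b]` strictly greater than the smallest internal `U`-vertex of `ws`. -/
def HasBackEdge {α β : Type*} [Preorder α] [Preorder β]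
    (E : Set (α × β)) (ws : List (α ⊕ β)) : Prop :=
  (∃ ua vc vd vint vj,
      ListLeast (uVerts ws) ua ∧ ListLeast (vVerts ws) vc ∧ ListGreatest (vVerts ws) vd ∧
      ListLeast (vVerts (internalVerts ws)) vint ∧
      (ua, vj) ∈ E ∧ vc ≤ vj ∧ vj ≤ vd ∧ vint < vj) ∨
  (∃ vc ua ub uint ui,
      ListLeast (vVerts ws) vc ∧ ListLeast (uVerts ws) ua ∧ ListGreatest (uVerts ws) ub ∧
      ListLeast (uVerts (internalVerts ws)) uint ∧
      (ui, vc) ∈ E ∧ ua ≤ ui ∧ ui ≤ ub ∧ uint < ui)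

/-- A path-restricted ordered bipartite graph: no forward path has a back edge. -/
def IsPRBG {α β : Type*} [Preorder α] [Preorder β] (E : Set (α × β)) : Prop :=
  ∀ ws : List (α ⊕ β), IsForwardPath E ws → ¬ HasBackEdge E ws

theorem prbg_key {α β : Type} [LinearOrder α] [LinearOrder β] {E : Finset (α × β)}
    (h : IsPRBG (E : Set (α × β))) {u u' : α} {c e w : β} (hu : u < u') (hce : c < e)
    (h1 : (u, c) ∈ E) (h2 : (u', c) ∈ E) (h3 : (u', e) ∈ E) (hw : c < w) (h4 : (u, w) ∈ E) :
    e < w := by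
  by_contra hcon
  have hcon : w ≤ e := not_lt.mp hcon
  refine h [Sum.inl u, Sum.inr c, Sum.inl u', Sum.inr e] ⟨⟨by simp, ?_, ?_⟩, Or.inl ⟨?_, ?_⟩⟩
    (Or.inl ⟨u, c, e, c, w, ?_⟩)
  · show List.IsChain _ _
    simp [BipAdj, h1, h2, h3]
  · simp [hu.ne, hce.ne]
  · show List.IsChain (· < ·) [u, u']
    simpa using hu
  · show List.IsChain (· < ·) [c, e]
    simpa using hce
  · simp [uVerts, vVerts, internalVerts, ListLeast, ListGreatest, hu.le, hce.le, h4, hw.le, hcon, hw]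

theorem prbg_log_lt {a b : ℕ} (ha : a ≠ 0) (h : 2 * a ≤ b) : Nat.log 2 a < Nat.log 2 b := by
  have h1 : Nat.log 2 (2 * a) ≤ Nat.log 2 b := Nat.log_mono_right h
  rw [mul_comm, Nat.log_mul_base (by norm_num) ha] at h1
  omega

theorem prbg_count {α β : Type} [LinearOrder α] [LinearOrder β] [Fintype α] [Fintype β]
    (E : Finset (α × β)) (h : IsPRBG (E : Set (α × β))) :
    E.card ≤ Fintype.card α +
      (Fintype.card α + Fintype.card β) * (Nat.log 2 (Fintype.card β) + 1) := by
  classical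
  set m := Fintype.card β with hm
  obtain ⟨r, hr, hrm⟩ : ∃ r : β → ℕ, StrictMono r ∧ ∀ v, r v < m := by
    let i : Fin m ≃o β := Fintype.orderIsoFinOfCardEq β rfl
    exact ⟨fun v => (i.symm v : ℕ), fun a b hab => i.symm.strictMono hab, fun v => (i.symm v).2⟩
  have hN : ∀ u v, ∃ N : β, (∃ w, v < w ∧ (u, w) ∈ E) →
      v < N ∧ (u, N) ∈ E ∧ ∀ w, v < w → (u, w) ∈ E → N ≤ w := by
    intro u v
    by_cases hex : ∃ w, v < w ∧ (u, w) ∈ E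
    · obtain ⟨N, hN, hmin⟩ := (Finset.univ.filter fun w => v < w ∧ (u, w) ∈ E).exists_min_image id
        (by obtain ⟨w, hw⟩ := hex; exact ⟨w, by simpa using hw⟩)
      simp only [Finset.mem_filter, Finset.mem_univ, true_and, id] at hN hmin
      exact ⟨N, fun _ => ⟨hN.1, hN.2, fun w h1 h2 => hmin w ⟨h1, h2⟩⟩⟩
    · exact ⟨v, fun h => absurd h hex⟩
  choose N hN using hN
  have hF : ∀ u (v : β), ∃ F : ℕ, (∃ w, v < w ∧ (u, w) ∈ E) →
      (∃ f, (u, f) ∈ E ∧ r f = F) ∧ ∀ w, (u, w) ∈ E → r w ≤ F := by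
    intro u v
    by_cases hex : ∃ w, v < w ∧ (u, w) ∈ E
    · obtain ⟨f, hf, hmax⟩ := (Finset.univ.filter fun w => (u, w) ∈ E).exists_max_image r
        (by obtain ⟨w, hw⟩ := hex; exact ⟨w, by simpa using hw.2⟩)
      simp only [Finset.mem_filter, Finset.mem_univ, true_and] at hf hmax
      exact ⟨r f, fun _ => ⟨⟨f, hf, rfl⟩, hmax⟩⟩
    · exact ⟨0, fun h => absurd h hex⟩
  choose F hF using hF
  let D : α × β → Prop := fun p => ∃ w, p.2 < w ∧ (p.1, w) ∈ E
  let A : α × β → Prop := fun p => 2 * (F p.1 p.2 - r (N p.1 p.2)) ≤ F p.1 p.2 - r p.2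
  have e1 := Finset.card_filter_add_card_filter_not (s := E) D
  have e2 := Finset.card_filter_add_card_filter_not (s := E.filter D) A
  have b0 : (E.filter fun p => ¬ D p).card ≤ Fintype.card α := by
    rw [← Finset.card_univ]
    refine Finset.card_le_card_of_injOn Prod.fst (by simp) ?_
    rintro ⟨u, v⟩ hp ⟨u', v'⟩ hq heq
    simp only [Finset.coe_filter, Set.mem_setOf_eq, D] at hp hq heq
    subst heq
    rcases lt_trichotomy v v' with hlt | rfl | hlt
    · exact absurd ⟨v', hlt, hq.1⟩ hp.2
    · rfl
    · exact absurd ⟨v, hlt, hp.1⟩ hq.2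
  have facts : ∀ u v, D (u, v) → r v < r (N u v) ∧ r (N u v) ≤ F u v ∧ F u v < m := by
    intro u v hd
    obtain ⟨h1, h2, h3⟩ := hN u v hd
    obtain ⟨⟨f, hf, hf'⟩, h5⟩ := hF u v hd
    exact ⟨hr h1, h5 _ h2, hf' ▸ hrm f⟩
  have bA : ((E.filter D).filter A).card ≤ Fintype.card α * (Nat.log 2 m + 1) := by
    have : Fintype.card α * (Nat.log 2 m + 1) =
        ((Finset.univ : Finset α) ×ˢ Finset.range (Nat.log 2 m + 1)).card := by simp
    rw [this]
    refine Finset.card_le_card_of_injOn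
      (fun p => (p.1, Nat.log 2 (F p.1 p.2 - r p.2))) ?_ ?_
    · rintro ⟨u, v⟩ hp
      simp only [Finset.coe_filter, Finset.mem_filter, Set.mem_setOf_eq] at hp
      have := facts u v hp.1.2
      have : Nat.log 2 (F u v - r v) ≤ Nat.log 2 m := Nat.log_mono_right (by omega)
      simp
      omega
    · have main : ∀ u v v', v < v' → (u, v') ∈ E → D (u, v) → D (u, v') → A (u, v) →
          Nat.log 2 (F u v' - r v') < Nat.log 2 (F u v - r v) := by
        intro u v v' hlt hE hd hd' hA
        have f1 := facts u v hd
        have f2 := facts u v' hd'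
        obtain ⟨h1, h2, h3⟩ := hN u v hd
        have h4 := hr.monotone (h3 v' hlt hE)
        obtain ⟨⟨f, hf, hf'⟩, h5⟩ := hF u v hd
        obtain ⟨⟨g, hg, hg'⟩, h6⟩ := hF u v' hd'
        have h7 := h5 g hg
        have h8 := h6 f hf
        simp only [A] at hA
        apply prbg_log_lt <;> omega
      rintro ⟨u, v⟩ hp ⟨u', v'⟩ hq heq
      simp only [Finset.coe_filter, Finset.mem_filter, Set.mem_setOf_eq, Prod.mk.injEq] at hp hq heq
      obtain ⟨rfl, heq⟩ := heq
      rcases lt_trichotomy v v' with hlt | rfl | hlt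
      · have := main u v v' hlt hq.1.1 hp.1.2 hq.1.2 hp.2
        omega
      · rfl
      · have := main u v' v hlt hp.1.1 hq.1.2 hp.1.2 hq.2
        omega
  have bB : ((E.filter D).filter fun p => ¬ A p).card ≤ m * (Nat.log 2 m + 1) := by
    have : m * (Nat.log 2 m + 1) =
        ((Finset.univ : Finset β) ×ˢ Finset.range (Nat.log 2 m + 1)).card := by simp [hm]
    rw [this]
    refine Finset.card_le_card_of_injOn
      (fun p => (p.2, Nat.log 2 (r (N p.1 p.2) - r p.2))) ?_ ?_
    · rintro ⟨u, v⟩ hp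
      simp only [Finset.coe_filter, Finset.mem_filter, Set.mem_setOf_eq] at hp
      have := facts u v hp.1.2
      have : Nat.log 2 (r (N u v) - r v) ≤ Nat.log 2 m := Nat.log_mono_right (by omega)
      simp
      omega
    · have main : ∀ u u' v, u < u' → (u, v) ∈ E → (u', v) ∈ E → D (u, v) → D (u', v) →
          ¬ A (u', v) → Nat.log 2 (r (N u' v) - r v) < Nat.log 2 (r (N u v) - r v) := by
        intro u u' v hlt hE hE' hd hd' hA
        have f1 := facts u v hd
        have f2 := facts u' v hd'
        obtain ⟨h1, h2, h3⟩ := hN u v hd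
        obtain ⟨⟨f, hf, hf'⟩, h5⟩ := hF u' v hd'
        have hvf : v < f := hr.lt_iff_lt.mp (by omega)
        have h7 := hr (prbg_key h hlt hvf hE hE' hf h1 h2)
        simp only [A] at hA
        apply prbg_log_lt <;> omega
      rintro ⟨u, v⟩ hp ⟨u', v'⟩ hq heq
      simp only [Finset.coe_filter, Finset.mem_filter, Set.mem_setOf_eq, Prod.mk.injEq] at hp hq heq
      obtain ⟨rfl, heq⟩ := heq
      rcases lt_trichotomy u u' with hlt | rfl | hlt
      · have := main u u' v hlt hp.1.1 hq.1.1 hp.1.2 hq.1.2 hq.2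
        omega
      · rfl
      · have := main u' u v hlt hq.1.1 hp.1.1 hq.1.2 hp.1.2 hp.2
        omega
  rw [add_mul]
  omega

/-- There is an absolute constant `C` such that every path-restricted ordered bipartite
graph `G = (U, V, E)` with `n = |U| + |V|` vertices (`n ≥ 2`) has at most
`n · log₂ n + C · n` edges. -/
theorem prbg_edge_upper_bound :
    ∃ C : ℝ, ∀ (α β : Type) [LinearOrder α] [LinearOrder β] [Fintype α] [Fintype β]
      (E : Finset (α × β)),
      2 ≤ Fintype.card α + Fintype.card β →
      IsPRBG (E : Set (α × β)) →
      (E.card : ℝ) ≤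
        (Fintype.card α + Fintype.card β : ℝ) *
            Real.logb 2 (Fintype.card α + Fintype.card β) +
          C * (Fintype.card α + Fintype.card β) := by
  refine ⟨2, ?_⟩
  intro α β _ _ _ _ E hn h
  have h1 := prbg_count E h
  set a := Fintype.card α
  set b := Fintype.card β
  have h2 : (E.card : ℝ) ≤ a + (a + b) * ((Nat.log 2 b : ℝ) + 1) := by exact_mod_cast h1
  have h3 : (Nat.log 2 b : ℝ) ≤ Real.logb 2 (a + b) := by
    have h4 : Nat.log 2 b ≤ Nat.log 2 (a + b) := Nat.log_mono_right (by omega)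
    have h5 := Real.natLog_le_logb (a + b) 2
    push_cast at h5
    exact le_trans (by exact_mod_cast h4) h5
  have ha : (0 : ℝ) ≤ a := Nat.cast_nonneg a
  have hb : (0 : ℝ) ≤ b := Nat.cast_nonneg b
  nlinarith [mul_le_mul_of_nonneg_left h3 (add_nonneg ha hb)]
end

section
/- There is an absolute constant C such that for every set P of n points in convex position in the Euclidean plane (n ≥ 2), the number of pairs {p, q} ⊆ P at Euclidean distance exactly 1 is at most 2n·log₂ n + C·n. -/
/-- A finite set of points in the plane is in convex position if every point of the set is an
extreme point of its convex hull. -/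
def ConvexPosition (P : Set (EuclideanSpace ℝ (Fin 2))) : Prop :=
  ∀ p ∈ P, p ∈ (convexHull ℝ P).extremePoints ℝ

abbrev PlaneE := EuclideanSpace ℝ (Fin 2)

def crs (x y z : PlaneE) : ℝ := (y 0 - x 0) * (z 1 - x 1) - (y 1 - x 1) * (z 0 - x 0)

lemma dist_one_iff (x y : PlaneE) :
    dist x y = 1 ↔ (x 0 - y 0)^2 + (x 1 - y 1)^2 = 1 := by
  rw [EuclideanSpace.dist_eq, Fin.sum_univ_two, Real.dist_eq, Real.dist_eq, sq_abs, sq_abs,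
    Real.sqrt_eq_one]

lemma hull_absurd {P : Finset PlaneE} (hP : ConvexPosition (P : Set PlaneE))
    {x y z w : PlaneE} (hx : x ∈ P) (hy : y ∈ P) (hz : z ∈ P) (hw : w ∈ P)
    (yx : y ≠ x) (zx : z ≠ x) (wx : w ≠ x) (a b c : ℝ) (ha : 0 ≤ a) (hb : 0 ≤ b) (hc : 0 ≤ c)
    (hs : 0 < a + b + c)
    (h0 : a * (y 0 - x 0) + b * (z 0 - x 0) + c * (w 0 - x 0) = 0)
    (h1 : a * (y 1 - x 1) + b * (z 1 - x 1) + c * (w 1 - x 1) = 0) : False := by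
  have h := hP x hx
  rw [Convex.mem_extremePoints_iff_mem_sdiff_convexHull_sdiff (convex_convexHull ℝ _)] at h
  apply h.2
  have mem : ∀ u ∈ P, u ≠ x → u ∈ convexHull ℝ (convexHull ℝ (P : Set PlaneE) \ {x}) := by
    intro u hu hux
    exact subset_convexHull ℝ _ ⟨subset_convexHull ℝ _ hu, hux⟩
  have key := (convex_convexHull ℝ (convexHull ℝ (P : Set PlaneE) \ {x})).sum_mem
    (t := (Finset.univ : Finset (Fin 3))) (w := ![a / (a+b+c), b / (a+b+c), c / (a+b+c)])
    (z := ![y, z, w])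
    (by intro i _; fin_cases i <;> simp <;> positivity)
    (by simp [Fin.sum_univ_three]; field_simp)
    (by intro i _; fin_cases i
        · exact mem _ hy yx
        · exact mem _ hz zx
        · exact mem _ hw wx)
  convert key using 1
  ext i
  fin_cases i
  · simp [Fin.sum_univ_three]; field_simp; linarith
  · simp [Fin.sum_univ_three]; field_simp; linarith

lemma crs_trans {P : Finset PlaneE} (hP : ConvexPosition (P : Set PlaneE))
    {x y z w : PlaneE} (hx : x ∈ P) (hy : y ∈ P) (hz : z ∈ P) (hw : w ∈ P)
    (h1 : 0 < crs x y z) (h2 : 0 < crs x z w) : 0 < crs x y w := by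
  by_contra h
  push Not at h
  have yx : y ≠ x := by rintro rfl; simp [crs] at h1
  have zx : z ≠ x := by rintro rfl; simp [crs] at h1
  have wx : w ≠ x := by rintro rfl; simp [crs] at h2
  refine hull_absurd hP hx hy hz hw yx zx wx (crs x z w) (-crs x y w) (crs x y z) h2.le
    (by linarith) h1.le (by linarith) ?_ ?_ <;> simp only [crs] <;> ring

lemma crs_ne {P : Finset PlaneE} (hP : ConvexPosition (P : Set PlaneE))
    {x y z : PlaneE} (hx : x ∈ P) (hy : y ∈ P) (hz : z ∈ P)
    (xy : x ≠ y) (yz : y ≠ z) (xz : x ≠ z) : crs x y z ≠ 0 := by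
  intro h
  simp only [crs] at h
  have hpos : 0 < (y 0 - x 0)^2 + (y 1 - x 1)^2 := by
    rcases lt_or_eq_of_le (by positivity : 0 ≤ (y 0 - x 0)^2 + (y 1 - x 1)^2) with h' | h'
    · exact h'
    · exfalso; apply xy; ext i
      fin_cases i
      · show x 0 = y 0
        nlinarith [sq_nonneg (y 0 - x 0), sq_nonneg (y 1 - x 1)]
      · show x 1 = y 1
        nlinarith [sq_nonneg (y 0 - x 0), sq_nonneg (y 1 - x 1)]
  obtain ⟨t, ht0, ht1⟩ : ∃ t : ℝ, z 0 - x 0 = t * (y 0 - x 0) ∧ z 1 - x 1 = t * (y 1 - x 1) := by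
    refine ⟨((y 0 - x 0) * (z 0 - x 0) + (y 1 - x 1) * (z 1 - x 1)) /
      ((y 0 - x 0)^2 + (y 1 - x 1)^2), ?_, ?_⟩
    · field_simp; linear_combination (- (y 1 - x 1)) * h
    · field_simp; linear_combination (y 0 - x 0) * h
  rcases le_or_gt t 0 with h' | h'
  · exact hull_absurd hP hx hy hz hz xy.symm xz.symm xz.symm (-t) 1 0 (by linarith) (by simp)
      (by simp) (by linarith) (by linear_combination ht0) (by linear_combination ht1)
  · rcases le_or_gt t 1 with h'' | h''
    · exact hull_absurd hP hz hx hy hy xz yz yz (1-t) t 0 (by linarith) (by linarith)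
        (by simp) (by linarith) (by linear_combination -ht0) (by linear_combination -ht1)
    · exact hull_absurd hP hy hx hz hz xy yz.symm yz.symm (t-1) 1 0 (by linarith) (by linarith)
        (by simp) (by linarith) (by linear_combination ht0) (by linear_combination ht1)

lemma crs_rot (x y z : PlaneE) : crs y z x = crs x y z := by simp only [crs]; ring
lemma crs_swap (x y z : PlaneE) : crs x z y = - crs x y z := by simp only [crs]; ring

/-- `p → q` is narrow on its left. -/
def Narrow (P : Finset PlaneE) (p q : PlaneE) : Prop :=
  ∀ a ∈ P, ∀ b ∈ P, 0 < crs p q a → 0 < crs p q b →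
    0 ≤ (a 0 - p 0) * (b 1 - q 1) - (a 1 - p 1) * (b 0 - q 0)

lemma slope_absurd (e1 e2 a1 a2 b1 b2 c1 c2 d1 d2 : ℝ)
    (ha : 0 < e1 * a2 - e2 * a1) (hb : 0 < e1 * b2 - e2 * b1)
    (hc : e1 * c2 - e2 * c1 < 0) (hd : e1 * d2 - e2 * d1 < 0)
    (h1 : a1 * b2 - a2 * b1 < 0) (h2 : c1 * d2 - c2 * d1 < 0)
    (h3 : 0 < d1 * a2 - d2 * a1) (h4 : 0 < b1 * c2 - b2 * c1) : False := by
  -- identity : [e a][b c] + [e b][c a] + [e c][a b] = 0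
  have i1 : (e1 * a2 - e2 * a1) * (b1 * c2 - b2 * c1) + (e1 * b2 - e2 * b1) * (c1 * a2 - c2 * a1)
    + (e1 * c2 - e2 * c1) * (a1 * b2 - a2 * b1) = 0 := by ring
  have i2 : (e1 * a2 - e2 * a1) * (c1 * d2 - c2 * d1) + (e1 * c2 - e2 * c1) * (d1 * a2 - d2 * a1)
    + (e1 * d2 - e2 * d1) * (a1 * c2 - a2 * c1) = 0 := by ring
  have j1 : (c1 * a2 - c2 * a1) < 0 := by
    by_contra h; push Not at h
    nlinarith [mul_pos ha h4, mul_nonneg hb.le h, mul_pos_of_neg_of_neg hc h1]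
  have j2 : 0 < (e1 * a2 - e2 * a1) * (-(c1 * d2 - c2 * d1)) := mul_pos ha (by linarith)
  have j3 : 0 < (-(e1 * c2 - e2 * c1)) * (d1 * a2 - d2 * a1) := mul_pos (by linarith) h3
  have j4 : 0 < (-(e1 * d2 - e2 * d1)) * (a1 * c2 - a2 * c1) := mul_pos (by linarith) (by linarith)
  nlinarith

lemma narrow_or {P : Finset PlaneE} (hP : ConvexPosition (P : Set PlaneE))
    {p q : PlaneE} (hp : p ∈ P) (hq : q ∈ P) : Narrow P p q ∨ Narrow P q p := by
  by_contra h
  push Not at h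
  obtain ⟨h1, h2⟩ := h
  simp only [Narrow, not_forall, not_le] at h1 h2
  obtain ⟨a, ha, b, hb, la, lb, hab⟩ := h1
  obtain ⟨c, hc, d, hd, lc, ld, hcd⟩ := h2
  have t1 : 0 < crs p d a :=
    crs_trans hP hp hd hq ha (by rw [← crs_rot]; rw [← crs_rot] ; simpa [crs_rot] using ld) la
  have t2 : 0 < crs q b c :=
    crs_trans hP hq hb hp hc (by rw [crs_rot]; exact lb) lc
  simp only [crs] at la lb lc ld t1 t2
  refine slope_absurd (q 0 - p 0) (q 1 - p 1) (a 0 - p 0) (a 1 - p 1) (b 0 - q 0) (b 1 - q 1)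
    (c 0 - q 0) (c 1 - q 1) (d 0 - p 0) (d 1 - p 1) ?_ ?_ ?_ ?_ ?_ ?_ ?_ ?_ <;> linarith

lemma geom1 (u1 u2 v1 v2 w1 w2 : ℝ) (hu : u1^2+u2^2 = 1) (hv : v1^2+v2^2 = 1)
    (hw : w1^2+w2^2 = 1) (huv : 0 < u1 * v2 - u2 * v1) (hvw : 0 < v1 * w2 - v2 * w1)
    (hn : 0 ≤ (v1 + w1) * (v2 - u2) - (v2 + w2) * (v1 - u1)) :
    w1 * (u1 - v1) + w2 * (u2 - v2) ≤ 0 := by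
  obtain ⟨s, hs⟩ : ∃ s, s = u1 * v2 - u2 * v1 := ⟨_, rfl⟩
  obtain ⟨c, hc⟩ : ∃ s, s = u1 * v1 + u2 * v2 := ⟨_, rfl⟩
  obtain ⟨S, hS⟩ : ∃ s, s = v1 * w2 - v2 * w1 := ⟨_, rfl⟩
  obtain ⟨C, hC⟩ : ∃ s, s = -(v1 * w1 + v2 * w2) := ⟨_, rfl⟩
  have hu1 : u1 = c * v1 + s * v2 := by rw [hc, hs]; linear_combination (-u1) * hv
  have hu2 : u2 = c * v2 - s * v1 := by rw [hc, hs]; linear_combination (-u2) * hv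
  have hw1 : w1 = -C * v1 - S * v2 := by rw [hC, hS]; linear_combination (-w1) * hv
  have hw2 : w2 = -C * v2 + S * v1 := by rw [hC, hS]; linear_combination (-w2) * hv
  rw [← hs] at huv
  rw [← hS] at hvw
  clear hs hc hS hC
  subst hu1 hu2 hw1 hw2
  have e1 : c^2 + s^2 = 1 := by linear_combination hu - (c^2+s^2) * hv
  have e2 : C^2 + S^2 = 1 := by linear_combination hw - (C^2+S^2) * hv
  have e3 : 0 ≤ (1 - C) * s - S * (1 - c) := by
    have : (1 - C) * s - S * (1 - c) = ((1 - C) * s - S * (1 - c)) * (v1^2+v2^2) := by rw [hv]; ring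
    rw [this]; refine hn.trans_eq ?_; ring
  have e4 : C * (1 - c) - S * s ≤ 0 := by
    have hC1 : 0 < 1 - C := by nlinarith
    have hc1 : 0 < 1 - c := by nlinarith
    have : 0 ≤ (1 - C) * (S * s - (1 + C) * (1 - c)) := by nlinarith [mul_nonneg hvw.le e3]
    have := nonneg_of_mul_nonneg_right this hC1
    nlinarith
  have : (C * (1 - c) - S * s) * (v1^2+v2^2) ≤ 0 := by rw [hv]; linarith
  refine le_trans (le_of_eq ?_) this
  ring

lemma geom2 (x1 x2 y1 y2 z1 z2 : ℝ) (h1 : 0 < x1 * y2 - x2 * y1) (h2 : 0 < y1 * z2 - y2 * z1)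
    (h3 : 0 < x1 * z2 - x2 * z1) (hd : x1 * y1 + x2 * y2 ≤ 0) (hx : x1^2+x2^2 = 1) :
    x1 * z1 + x2 * z2 < 0 := by
  have : (x1 * z1 + x2 * z2) * (x1 * y2 - x2 * y1) =
    (x1 * y1 + x2 * y2) * (x1 * z2 - x2 * z1) - (x1^2+x2^2) * (y1 * z2 - y2 * z1) := by ring
  rw [hx] at this
  by_contra h
  push Not at h
  nlinarith [mul_nonneg h h1.le, mul_nonneg_of_nonpos_of_nonpos hd (by linarith : -(x1 * z2 - x2 * z1) ≤ 0)]

lemma pattern {P : Finset PlaneE} (hP : ConvexPosition (P : Set PlaneE))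
    {p p' q0 q0' q1 : PlaneE} (hp : p ∈ P) (hp' : p' ∈ P) (hq0 : q0 ∈ P) (hq0' : q0' ∈ P)
    (hq1 : q1 ∈ P) (d0 : dist p q0 = 1) (d1 : dist p q1 = 1) (d1' : dist p' q1 = 1)
    (d0' : dist p' q0' = 1) (hn : Narrow P p q0) (o0 : 0 < crs p q0 q1) (o1 : 0 < crs p q1 p')
    (o0' : 0 < crs p' q0' q1) : 0 < crs q0' q0 q1 := by
  rw [dist_one_iff] at d0 d1 d1' d0'
  have o2 : 0 < crs p q0 p' := crs_trans hP hp hq0 hq1 hp' o0 o1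
  have n1 := hn p' hp' q1 hq1 o2 o0
  have A := geom1 (q0 0 - p 0) (q0 1 - p 1) (q1 0 - p 0) (q1 1 - p 1) (p' 0 - q1 0) (p' 1 - q1 1)
    (by linarith) (by linarith) (by linarith) o0
    (by simp only [crs] at o1; linarith) (by linarith)
  have A' : (p' 0 - q1 0) * (q0 0 - q1 0) + (p' 1 - q1 1) * (q0 1 - q1 1) ≤ 0 := by linarith
  have n01 : q0' ≠ q1 := by rintro rfl; simp [crs] at o0'; linarith
  have B : 0 < (p' 0 - q1 0) * (q0' 0 - q1 0) + (p' 1 - q1 1) * (q0' 1 - q1 1) := by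
    by_contra h
    push Not at h
    have z0 : q0' 0 - q1 0 = 0 := by
      nlinarith [sq_nonneg (q0' 0 - q1 0), sq_nonneg (q0' 1 - q1 1)]
    have z1 : q0' 1 - q1 1 = 0 := by
      nlinarith [sq_nonneg (q0' 0 - q1 0), sq_nonneg (q0' 1 - q1 1)]
    simp only [crs] at o0'
    have e0 : q1 0 = q0' 0 := by linarith
    have e1 : q1 1 = q0' 1 := by linarith
    rw [e0, e1] at o0'
    linarith
  have n00 : q0' ≠ q0 := by rintro rfl; linarith
  have n0 : q0 ≠ q1 := by rintro rfl; simp [crs] at o0; linarith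
  by_contra hcon
  have hne := crs_ne hP hq0' hq0 hq1 n00 n0 n01
  have o3 : 0 < crs q0 q0' q1 := by
    have : crs q0' q0 q1 < 0 := lt_of_le_of_ne (not_lt.mp hcon) hne
    simp only [crs] at this ⊢; linarith
  -- at q1 : p', q0, q0'
  have r1 : 0 < crs q1 p' p := by rw [← crs_rot] ; rw [← crs_rot]; simpa [crs_rot] using o1
  have r2 : 0 < crs q1 p q0 := by rw [crs_rot, crs_rot] at *; simpa [crs_rot] using o0
  have r3 : 0 < crs q1 p' q0 := crs_trans hP hq1 hp' hp hq0 r1 r2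
  have r4 : 0 < crs q1 q0 q0' := by simp only [crs] at o3 ⊢; linarith
  have r5 : 0 < crs q1 p' q0' := crs_trans hP hq1 hp' hq0 hq0' r3 r4
  have := geom2 _ _ _ _ _ _ r3 r4 r5 A' (by linarith)
  linarith

lemma crs_mid {P : Finset PlaneE} (hP : ConvexPosition (P : Set PlaneE))
    {x y z w : PlaneE} (hx : x ∈ P) (hy : y ∈ P) (hz : z ∈ P) (hw : w ∈ P)
    (h1 : 0 < crs x y z) (h2 : 0 < crs x z w) : 0 < crs y z w := by
  have := crs_trans hP hz hw hx hy (by rw [crs_rot]; exact h2)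
    (by rw [← crs_rot]; exact h1)
  rw [crs_rot] at this
  exact this

open Classical in
noncomputable def arcLen (P : Finset PlaneE) (x y : PlaneE) : ℕ :=
  1 + (P.filter (fun z => 0 < crs x z y)).card

lemma arcLen_pos (P : Finset PlaneE) (x y : PlaneE) : 1 ≤ arcLen P x y := by
  unfold arcLen; omega

lemma arcLen_le (P : Finset PlaneE) {x y : PlaneE} (hx : x ∈ P) : arcLen P x y ≤ P.card := by
  classical
  unfold arcLen
  have h : P.filter (fun z => 0 < crs x z y) ⊆ P.erase x := by
    intro z hz
    rw [Finset.mem_filter] at hz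
    refine Finset.mem_erase.mpr ⟨?_, hz.1⟩
    rintro rfl
    simp [crs] at hz
  have h1 := Finset.card_le_card h
  have h2 := Finset.card_erase_add_one hx
  convert (by omega : 1 + (P.filter (fun z => 0 < crs x z y)).card ≤ P.card)

lemma arcLen_add {P : Finset PlaneE} (hP : ConvexPosition (P : Set PlaneE))
    {x y z : PlaneE} (hx : x ∈ P) (hy : y ∈ P) (hz : z ∈ P) (h : 0 < crs x y z) :
    arcLen P x y + arcLen P y z ≤ arcLen P x z := by
  classical
  unfold arcLen
  have hd : Disjoint (P.filter (fun w => 0 < crs x w y)) (P.filter (fun w => 0 < crs y w z)) := by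
    rw [Finset.disjoint_left]
    intro w h1 h2
    rw [Finset.mem_filter] at h1 h2
    have a1 : 0 < crs y x w := by rw [← crs_rot]; exact h1.2
    have := crs_trans hP hy hx h1.1 hz a1 h2.2
    simp only [crs] at this h
    linarith
  have hs : insert y ((P.filter (fun w => 0 < crs x w y)) ∪ (P.filter (fun w => 0 < crs y w z))) ⊆
      P.filter (fun w => 0 < crs x w z) := by
    intro w hw
    rw [Finset.mem_insert, Finset.mem_union, Finset.mem_filter, Finset.mem_filter] at hw
    rw [Finset.mem_filter]
    rcases hw with rfl | hw | hw
    · exact ⟨hy, h⟩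
    · exact ⟨hw.1, crs_trans hP hx hw.1 hy hz hw.2 h⟩
    · refine ⟨hw.1, ?_⟩
      have := crs_trans hP hz hx hy hw.1 (by rw [← crs_rot]; exact h)
        (by rw [← crs_rot]; exact hw.2)
      rw [← crs_rot] at this
      exact this
  have hn : y ∉ (P.filter (fun w => 0 < crs x w y)) ∪ (P.filter (fun w => 0 < crs y w z)) := by
    rw [Finset.mem_union, Finset.mem_filter, Finset.mem_filter]
    rintro (⟨_, h⟩ | ⟨_, h⟩)
    · have : crs x y y = 0 := by simp only [crs]; ring
      linarith
    · have : crs y y z = 0 := by simp only [crs]; ring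
      linarith
  have := Finset.card_le_card hs
  rw [Finset.card_insert_of_notMem hn, Finset.card_union_of_disjoint hd] at this
  have e : ∀ a b c : ℕ, a + b + 1 ≤ c → (1 + a) + (1 + b) ≤ 1 + c := by intros; omega
  convert e _ _ _ this

open Classical in
noncomputable def prevs (P : Finset PlaneE) (p q : PlaneE) : Finset PlaneE :=
  P.filter (fun r => dist p r = 1 ∧ Narrow P p r ∧ 0 < crs p r q)

lemma mem_prevs {P : Finset PlaneE} {p q r : PlaneE} :
    r ∈ prevs P p q ↔ r ∈ P ∧ dist p r = 1 ∧ Narrow P p r ∧ 0 < crs p r q := by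
  simp [prevs]

noncomputable def span (P : Finset PlaneE) (p q : PlaneE) : ℕ :=
  (prevs P p q).sup (fun r => arcLen P r q)

lemma le_span {P : Finset PlaneE} {p q r : PlaneE} (h : r ∈ prevs P p q) :
    arcLen P r q ≤ span P p q := Finset.le_sup (f := fun r => arcLen P r q) h

lemma span_le (P : Finset PlaneE) (p q : PlaneE) : span P p q ≤ P.card := by
  apply Finset.sup_le
  intro r hr
  exact arcLen_le P (mem_prevs.mp hr).1

lemma span_eq {P : Finset PlaneE} {p q : PlaneE} (h : (prevs P p q).Nonempty) :
    ∃ r ∈ prevs P p q, span P p q = arcLen P r q :=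
  Finset.exists_mem_eq_sup _ h _

lemma log_ne {a b : ℕ} (ha : 1 ≤ a) (h : 2 * a ≤ b) : Nat.log 2 a < Nat.log 2 b := by
  have : Nat.log 2 (a * 2) = Nat.log 2 a + 1 := Nat.log_mul_base (by norm_num) (by omega)
  have := Nat.log_mono_right (b := 2) (show a * 2 ≤ b by omega)
  omega

open Classical in
noncomputable def dirEdges (P : Finset PlaneE) : Finset (PlaneE × PlaneE) :=
  (P ×ˢ P).filter (fun e => dist e.1 e.2 = 1 ∧ Narrow P e.1 e.2)

lemma mem_dirEdges {P : Finset PlaneE} {e : PlaneE × PlaneE} :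
    e ∈ dirEdges P ↔ (e.1 ∈ P ∧ e.2 ∈ P) ∧ dist e.1 e.2 = 1 ∧ Narrow P e.1 e.2 := by
  simp [dirEdges]

lemma crs_total {P : Finset PlaneE} (hP : ConvexPosition (P : Set PlaneE))
    {x y z : PlaneE} (hx : x ∈ P) (hy : y ∈ P) (hz : z ∈ P)
    (xy : x ≠ y) (yz : y ≠ z) (xz : x ≠ z) : 0 < crs x y z ∨ 0 < crs x z y := by
  rcases lt_or_gt_of_ne (crs_ne hP hx hy hz xy yz xz) with h | h
  · right; rw [crs_swap]; linarith
  · left; exact h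

lemma ne_of_dist_one {x y : PlaneE} (h : dist x y = 1) : x ≠ y := by
  rintro rfl; simp at h

lemma spanA {P : Finset PlaneE} (hP : ConvexPosition (P : Set PlaneE))
    {p q r : PlaneE} (hp : p ∈ P) (hq : q ∈ P) (hr : r ∈ P) (dq : dist p q = 1)
    (nq : Narrow P p q) (hne : (prevs P p q).Nonempty)
    (hA : ∀ s ∈ prevs P p r, span P p r ≤ 2 * arcLen P s r) (ho : 0 < crs p q r) :
    Nat.log 2 (span P p q) < Nat.log 2 (span P p r) := by
  obtain ⟨s, hs, he⟩ := span_eq hne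
  have hs' := mem_prevs.mp hs
  have m1 : q ∈ prevs P p r := mem_prevs.mpr ⟨hq, dq, nq, ho⟩
  have m2 : s ∈ prevs P p r := mem_prevs.mpr
    ⟨hs'.1, hs'.2.1, hs'.2.2.1, crs_trans hP hp hs'.1 hq hr hs'.2.2.2 ho⟩
  have a1 := hA q m1
  have a2 := le_span m2
  have a3 := arcLen_add hP hs'.1 hq hr (crs_mid hP hp hs'.1 hq hr hs'.2.2.2 ho)
  have a4 := arcLen_pos P s q
  apply log_ne <;> omega

lemma spanB {P : Finset PlaneE} (hP : ConvexPosition (P : Set PlaneE))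
    {p p' q : PlaneE} (hp : p ∈ P) (hp' : p' ∈ P) (hq : q ∈ P) (dp : dist p q = 1)
    (dp' : dist p' q = 1) (hne : (prevs P p q).Nonempty)
    (hB : ∃ s ∈ prevs P p' q, 2 * arcLen P s q < span P p' q) (ho : 0 < crs p q p') :
    Nat.log 2 (span P p q) < Nat.log 2 (span P p' q) := by
  obtain ⟨s, hs, he⟩ := span_eq hne
  obtain ⟨s', hs', hlt⟩ := hB
  have ms := mem_prevs.mp hs
  have ms' := mem_prevs.mp hs'
  have o := pattern hP hp hp' ms.1 ms'.1 hq ms.2.1 dp dp' ms'.2.1 ms.2.2.1 ms.2.2.2 ho ms'.2.2.2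
  have a3 := arcLen_add hP ms'.1 ms.1 hq o
  have a4 := arcLen_pos P s q
  apply log_ne <;> omega

lemma card_dirEdges {P : Finset PlaneE} (hP : ConvexPosition (P : Set PlaneE)) :
    (dirEdges P).card ≤ P.card + 2 * (P.card * (Nat.log 2 P.card + 1)) := by
  classical
  let E1 := (dirEdges P).filter (fun e => ¬ (prevs P e.1 e.2).Nonempty)
  let E2 := (dirEdges P).filter (fun e => (prevs P e.1 e.2).Nonempty ∧
    ∀ s ∈ prevs P e.1 e.2, span P e.1 e.2 ≤ 2 * arcLen P s e.2)
  let E3 := (dirEdges P).filter (fun e => (prevs P e.1 e.2).Nonempty ∧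
    ∃ s ∈ prevs P e.1 e.2, 2 * arcLen P s e.2 < span P e.1 e.2)
  have hsub : dirEdges P ⊆ E1 ∪ (E2 ∪ E3) := by
    intro e he
    simp only [E1, E2, E3, Finset.mem_union, Finset.mem_filter]
    by_cases h : (prevs P e.1 e.2).Nonempty
    · by_cases h' : ∀ s ∈ prevs P e.1 e.2, span P e.1 e.2 ≤ 2 * arcLen P s e.2
      · exact Or.inr (Or.inl ⟨he, h, h'⟩)
      · push Not at h'
        exact Or.inr (Or.inr ⟨he, h, h'⟩)
    · exact Or.inl ⟨he, h⟩
  have hlog : ∀ p q, Nat.log 2 (span P p q) ∈ Finset.range (Nat.log 2 P.card + 1) := by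
    intro p q
    rw [Finset.mem_range]
    have := Nat.log_mono_right (b := 2) (span_le P p q)
    omega
  have h1 : E1.card ≤ P.card := by
    apply Finset.card_le_card_of_injOn (fun e => e.1)
    · intro e he
      exact (mem_dirEdges.mp (Finset.mem_filter.mp he).1).1.1
    · rintro ⟨p, q⟩ he ⟨p', r⟩ he' heq
      obtain rfl : p = p' := heq
      obtain ⟨m, hn⟩ := Finset.mem_filter.mp he
      obtain ⟨m', hn'⟩ := Finset.mem_filter.mp he'
      obtain ⟨⟨hp, hq⟩, dq, nq⟩ := mem_dirEdges.mp m
      obtain ⟨⟨_, hr⟩, dr, nr⟩ := mem_dirEdges.mp m'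
      by_contra hc
      have hqr : q ≠ r := fun h => hc (by rw [h])
      rcases crs_total hP hp hq hr (ne_of_dist_one dq) hqr (ne_of_dist_one dr) with h | h
      · exact hn' ⟨q, mem_prevs.mpr ⟨hq, dq, nq, h⟩⟩
      · exact hn ⟨r, mem_prevs.mpr ⟨hr, dr, nr, h⟩⟩
  have h2 : E2.card ≤ P.card * (Nat.log 2 P.card + 1) := by
    rw [← Finset.card_range (Nat.log 2 P.card + 1), ← Finset.card_product]
    apply Finset.card_le_card_of_injOn (fun e => (e.1, Nat.log 2 (span P e.1 e.2)))
    · intro e he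
      exact Finset.mem_product.mpr
        ⟨(mem_dirEdges.mp (Finset.mem_filter.mp he).1).1.1, hlog _ _⟩
    · rintro ⟨p, q⟩ he ⟨p', r⟩ he' heq
      obtain ⟨e1, e2⟩ := Prod.mk.inj heq
      dsimp only at e1 e2
      subst e1
      obtain ⟨m, hn, hA⟩ := Finset.mem_filter.mp he
      obtain ⟨m', hn', hA'⟩ := Finset.mem_filter.mp he'
      obtain ⟨⟨hp, hq⟩, dq, nq⟩ := mem_dirEdges.mp m
      obtain ⟨⟨_, hr⟩, dr, nr⟩ := mem_dirEdges.mp m'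
      by_contra hc
      have hqr : q ≠ r := fun h => hc (by rw [h])
      rcases crs_total hP hp hq hr (ne_of_dist_one dq) hqr (ne_of_dist_one dr) with h | h
      · exact absurd e2 (spanA hP hp hq hr dq nq hn hA' h).ne
      · exact absurd e2 (spanA hP hp hr hq dr nr hn' hA h).ne'
  have h3 : E3.card ≤ P.card * (Nat.log 2 P.card + 1) := by
    rw [← Finset.card_range (Nat.log 2 P.card + 1), ← Finset.card_product]
    apply Finset.card_le_card_of_injOn (fun e => (e.2, Nat.log 2 (span P e.1 e.2)))
    · intro e he
      exact Finset.mem_product.mpr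
        ⟨(mem_dirEdges.mp (Finset.mem_filter.mp he).1).1.2, hlog _ _⟩
    · rintro ⟨p, q⟩ he ⟨p', q'⟩ he' heq
      obtain ⟨e1, e2⟩ := Prod.mk.inj heq
      dsimp only at e1 e2
      subst e1
      obtain ⟨m, hn, hB⟩ := Finset.mem_filter.mp he
      obtain ⟨m', hn', hB'⟩ := Finset.mem_filter.mp he'
      obtain ⟨⟨hp, hq⟩, dp, np⟩ := mem_dirEdges.mp m
      obtain ⟨⟨hp', _⟩, dp', np'⟩ := mem_dirEdges.mp m'
      by_contra hc
      have hpp : p ≠ p' := fun h => hc (by rw [h])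
      rcases crs_total hP hp hq hp' (ne_of_dist_one dp) (ne_of_dist_one dp').symm hpp with h | h
      · exact absurd e2 (spanB hP hp hp' hq dp dp' hn hB' h).ne
      · rw [← crs_rot] at h
        rw [crs_rot, ← crs_rot] at h
        have h' : 0 < crs p' q p := by simp only [crs] at h ⊢; linarith
        exact absurd e2 (spanB hP hp' hp hq dp' dp hn' hB h').ne'
  have := Finset.card_le_card hsub
  have := Finset.card_union_le E1 (E2 ∪ E3)
  have := Finset.card_union_le E2 E3
  omega

/-- There is an absolute constant `C` such that every set `P` of `n ≥ 2` points in convex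
position in the plane determines at most `2n·log₂ n + C·n` pairs `{p, q}` at Euclidean
distance exactly `1`.  (Each unordered pair corresponds to exactly two ordered pairs, whence
the factor `2` on the right.) -/
theorem unit_distances_convex_position :
    ∃ C : ℝ, ∀ P : Finset (EuclideanSpace ℝ (Fin 2)),
      2 ≤ P.card →
      ConvexPosition (P : Set (EuclideanSpace ℝ (Fin 2))) →
      ({e : EuclideanSpace ℝ (Fin 2) × EuclideanSpace ℝ (Fin 2) |
          e.1 ∈ P ∧ e.2 ∈ P ∧ dist e.1 e.2 = 1}.ncard : ℝ) ≤
        2 * (2 * P.card * Real.logb 2 P.card + C * P.card) := by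
  classical
  refine ⟨3, fun P _ hP => ?_⟩
  have hsub : {e : PlaneE × PlaneE | e.1 ∈ P ∧ e.2 ∈ P ∧ dist e.1 e.2 = 1} ⊆
      ((dirEdges P ∪ (dirEdges P).image Prod.swap : Finset (PlaneE × PlaneE)) :
        Set (PlaneE × PlaneE)) := by
    rintro ⟨p, q⟩ ⟨hp, hq, hd⟩
    dsimp only at hp hq hd
    rw [Finset.mem_coe, Finset.mem_union]
    rcases narrow_or hP hp hq with h | h
    · exact Or.inl (mem_dirEdges.mpr ⟨⟨hp, hq⟩, hd, h⟩)
    · exact Or.inr (Finset.mem_image.mpr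
        ⟨(q, p), mem_dirEdges.mpr ⟨⟨hq, hp⟩, by rw [dist_comm]; exact hd, h⟩, rfl⟩)
  have h1 := Set.ncard_le_ncard hsub (Finset.finite_toSet _)
  rw [Set.ncard_coe_finset] at h1
  have h2 := Finset.card_union_le (dirEdges P) ((dirEdges P).image Prod.swap)
  have h3 : ((dirEdges P).image Prod.swap).card ≤ (dirEdges P).card := Finset.card_image_le
  have h4 := card_dirEdges hP
  have h5 : {e : PlaneE × PlaneE | e.1 ∈ P ∧ e.2 ∈ P ∧ dist e.1 e.2 = 1}.ncard ≤
      2 * (P.card + 2 * (P.card * (Nat.log 2 P.card + 1))) := by omega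
  have h6 : ({e : PlaneE × PlaneE | e.1 ∈ P ∧ e.2 ∈ P ∧ dist e.1 e.2 = 1}.ncard : ℝ) ≤
      2 * (P.card + 2 * (P.card * (Nat.log 2 P.card + 1))) := by exact_mod_cast h5
  have h7 : (Nat.log 2 P.card : ℝ) ≤ Real.logb 2 P.card := by
    exact_mod_cast Real.natLog_le_logb P.card 2
  have h8 : (P.card : ℝ) * Nat.log 2 P.card ≤ P.card * Real.logb 2 P.card :=
    mul_le_mul_of_nonneg_left h7 (Nat.cast_nonneg _)
  refine h6.trans ?_
  nlinarith
end

section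
/- There is an absolute constant C such that every locally Gabriel graph on a set P of n points in convex position in the Euclidean plane (n ≥ 2) has at most 2n·log₂ n + C·n edges. -/
open EuclideanGeometry

/-- `E` is the edge set of a locally Gabriel graph on the point set `P`: edges join distinct
points of `P`, the edge relation is symmetric, and whenever `(u, v)` and `(u, w)` are edges
with `v ≠ w`, both angles `∠uvw` and `∠uwv` are strictly less than `π/2`. -/
def IsLGG (P : Set (EuclideanSpace ℝ (Fin 2)))
    (E : Set (EuclideanSpace ℝ (Fin 2) × EuclideanSpace ℝ (Fin 2))) : Prop :=
  (∀ e ∈ E, e.1 ∈ P ∧ e.2 ∈ P ∧ e.1 ≠ e.2) ∧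
  (∀ u v, (u, v) ∈ E → (v, u) ∈ E) ∧
  (∀ u v w, (u, v) ∈ E → (u, w) ∈ E → v ≠ w →
    EuclideanGeometry.angle u v w < Real.pi / 2 ∧
      EuclideanGeometry.angle u w v < Real.pi / 2)

namespace LGGaux

open Classical in
theorem split {V : Type*} (X : V → ℝ) (hX : Function.Injective X) (B : Finset V) :
    ∀ j : ℕ, j ≤ B.card → ∃ L R : Finset V, L ⊆ B ∧ R ⊆ B ∧ (∀ x ∈ B, x ∈ L ∨ x ∈ R) ∧
      L.card = j ∧ L.card + R.card = B.card ∧ ∀ x ∈ L, ∀ y ∈ R, X x < X y := by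
  intro j
  induction j with
  | zero => intro _; exact ⟨∅, B, by simp, by simp, by simp, by simp, by simp, by simp⟩
  | succ j ih =>
    intro hj
    obtain ⟨L, R, hL, hR, hB, hc, hs, hlt⟩ := ih (by omega)
    have hne : R.Nonempty := by
      rw [← Finset.card_pos]; omega
    obtain ⟨m, hm, hmin⟩ := Finset.exists_min_image R X hne
    have hmL : m ∉ L := fun h => lt_irrefl _ (hlt m h m hm)
    refine ⟨insert m L, R.erase m, ?_, ?_, ?_, ?_, ?_, ?_⟩
    · intro x hx
      rcases Finset.mem_insert.1 hx with rfl | h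
      · exact hR hm
      · exact hL h
    · exact (Finset.erase_subset _ _).trans hR
    · intro x hx
      by_cases h : x = m
      · left; simp [h]
      · rcases hB x hx with h1 | h1
        · left; simp [h1]
        · right; simp [h1, h]
    · rw [Finset.card_insert_of_notMem hmL, hc]
    · rw [Finset.card_insert_of_notMem hmL, Finset.card_erase_of_mem hm]
      have := Finset.card_pos.2 hne
      omega
    · intro x hx y hy
      have hy' := Finset.mem_erase.1 hy
      rcases Finset.mem_insert.1 hx with rfl | h
      · exact lt_of_le_of_ne (hmin y hy'.2) (fun h => hy'.1 (hX h).symm)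
      · exact hlt x h y hy'.2

def NoPat {V : Type*} (X : V → ℝ) (F : Finset (V × V)) : Prop :=
  ∀ a a' b b', X a < X a' → X b < X b' → (a, b) ∈ F → (a', b') ∈ F →
    (∃ b2, X b < X b2 ∧ X b2 ≤ X b' ∧ (a, b2) ∈ F) →
    (∃ a3, X a < X a3 ∧ X a3 ≤ X a' ∧ (a3, b) ∈ F) →
    (∃ b3, X b ≤ X b3 ∧ X b3 < X b' ∧ (a', b3) ∈ F) →
    (∃ a2, X a ≤ X a2 ∧ X a2 < X a' ∧ (a2, b') ∈ F) → False

theorem NoPat.mono {V : Type*} {X : V → ℝ} {F G : Finset (V × V)} (h : NoPat X F) (hG : G ⊆ F) :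
    NoPat X G := by
  rintro a a' b b' h1 h2 h3 h4 ⟨b2, p1, p2, p3⟩ ⟨a3, q1, q2, q3⟩ ⟨b3, r1, r2, r3⟩ ⟨a2, s1, s2, s3⟩
  exact h a a' b b' h1 h2 (hG h3) (hG h4) ⟨b2, p1, p2, hG p3⟩ ⟨a3, q1, q2, hG q3⟩
    ⟨b3, r1, r2, hG r3⟩ ⟨a2, s1, s2, hG s3⟩

open Classical in
theorem count_snd {V : Type*} (X : V → ℝ) (hX : Function.Injective X) (G : Finset (V × V))
    (B : Finset V) (hG : ∀ e ∈ G, e.2 ∈ B)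
    (h : ∀ a a' b, (a, b) ∈ G → (a', b) ∈ G → ¬ X a < X a') : G.card ≤ B.card := by
  apply Finset.card_le_card_of_injOn Prod.snd (fun e he => hG e he)
  rintro ⟨a, b⟩ h1 ⟨a', b'⟩ h2 hb
  simp only at hb
  subst hb
  have e1 := h a a' b h1 h2
  have e2 := h a' a b h2 h1
  rw [hX (le_antisymm (not_lt.1 e2) (not_lt.1 e1))]

open Classical in
theorem count_fst {V : Type*} (X : V → ℝ) (hX : Function.Injective X) (G : Finset (V × V))
    (B : Finset V) (hG : ∀ e ∈ G, e.1 ∈ B)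
    (h : ∀ a b b', (a, b) ∈ G → (a, b') ∈ G → ¬ X b < X b') : G.card ≤ B.card := by
  apply Finset.card_le_card_of_injOn Prod.fst (fun e he => hG e he)
  rintro ⟨a, b⟩ h1 ⟨a', b'⟩ h2 hb
  simp only at hb
  subst hb
  have e1 := h a b b' h1 h2
  have e2 := h a b' b h2 h1
  rw [hX (le_antisymm (not_lt.1 e2) (not_lt.1 e1))]

open Classical in
theorem comb {V : Type*} (X : V → ℝ) (hX : Function.Injective X) (k : ℕ) :
    ∀ (A B : Finset V) (F : Finset (V × V)), F ⊆ A ×ˢ B → NoPat X F → B.card ≤ 2 ^ k →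
      F.card ≤ (A.card + B.card) * k + A.card := by
  induction k with
  | zero =>
    intro A B F hF _ hB
    have := Finset.card_le_card hF
    rw [Finset.card_product] at this
    have h2 : A.card * B.card ≤ A.card * 1 := Nat.mul_le_mul_left _ (by simpa using hB)
    omega
  | succ k ih =>
    intro A B F hF hN hB
    obtain ⟨L, R, hL, hR, hLR, hc, hs, hlt⟩ := split X hX B (B.card / 2) (by omega)
    have hLk : L.card ≤ 2 ^ k := by rw [pow_succ] at hB; omega
    have hRk : R.card ≤ 2 ^ k := by rw [pow_succ] at hB; omega
    set FL := F.filter (fun e => e.2 ∈ L ∧ ∃ b2 ∈ L, X e.2 < X b2 ∧ (e.1, b2) ∈ F) with hFL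
    set FR := F.filter (fun e => e.2 ∈ R ∧ ∃ b3 ∈ R, X b3 < X e.2 ∧ (e.1, b3) ∈ F) with hFR
    have key : ∀ a a3 b a2 a' b', (a, b) ∈ FL → (a3, b) ∈ FL → X a < X a3 →
        (a2, b') ∈ FR → (a', b') ∈ FR → X a2 < X a' → X a ≤ X a2 → X a3 ≤ X a' → False := by
      intro a a3 b a2 a' b' h1 h2 h3 h4 h5 h6 h7 h8
      simp only [hFL, hFR, Finset.mem_filter] at h1 h2 h4 h5
      obtain ⟨h1, hb, b2, hb2, hbb2, hab2⟩ := h1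
      obtain ⟨h5, hb', b3, hb3, hbb3, hab3⟩ := h5
      exact hN a a' b b' (by linarith) (hlt _ hb _ hb') h1 h5
        ⟨b2, hbb2, (hlt _ hb2 _ hb').le, hab2⟩ ⟨a3, h3, h8, h2.1⟩
        ⟨b3, (hlt _ hb _ hb3).le, hbb3, hab3⟩ ⟨a2, h7, h6, h4.1⟩
    have hsplit : ∃ A1 A2 : Finset V, A1 ⊆ A ∧ A2 ⊆ A ∧ (∀ a ∈ A, a ∈ A1 ∨ a ∈ A2) ∧
        A1.card + A2.card = A.card ∧
        (∀ a a' b, a ∈ A1 → a' ∈ A1 → (a, b) ∈ FL → (a', b) ∈ FL → ¬ X a < X a') ∧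
        (∀ a a' b, a ∈ A2 → a' ∈ A2 → (a, b) ∈ FR → (a', b) ∈ FR → ¬ X a < X a') := by
      set Zs := FR.filter (fun e => ∃ a', X e.1 < X a' ∧ (a', e.2) ∈ FR) with hZs
      by_cases hne : Zs.Nonempty
      · obtain ⟨⟨z, b'⟩, hz, hmax⟩ := Finset.exists_max_image Zs (fun e => X e.1) hne
        have hz' := hz
        simp only [hZs, Finset.mem_filter] at hz'
        obtain ⟨hz1, w, hzw, hw⟩ := hz'
        refine ⟨A.filter (fun a => X a ≤ X z), A.filter (fun a => ¬ X a ≤ X z),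
          Finset.filter_subset _ _, Finset.filter_subset _ _, ?_, ?_, ?_, ?_⟩
        · intro a ha
          by_cases h : X a ≤ X z
          · left; simp [ha, h]
          · right; rw [Finset.mem_filter]; exact ⟨ha, h⟩
        · exact Finset.card_filter_add_card_filter_not _
        · intro a a' b ha ha' h1 h2 h3
          have ha := (Finset.mem_filter.1 ha).2
          have ha' := (Finset.mem_filter.1 ha').2
          exact key a a' b z w b' h1 h2 h3 hz1 hw hzw ha (by linarith)
        · intro a a' b ha ha' h1 h2 h3
          have ha := (Finset.mem_filter.1 ha).2
          have : (a, b) ∈ Zs := Finset.mem_filter.2 ⟨h1, a', h3, h2⟩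
          exact ha (hmax _ this)
      · refine ⟨∅, A, by simp, by simp, by simp, by simp, by simp, ?_⟩
        intro a a' b ha ha' h1 h2 h3
        exact hne ⟨(a, b), Finset.mem_filter.2 ⟨h1, a', h3, h2⟩⟩
    obtain ⟨A1, A2, hA1, hA2, hA, hAc, hcL, hcR⟩ := hsplit
    set G1 := F.filter (fun e => e.1 ∈ A1 ∧ e.2 ∈ R) with hG1
    set G2 := F.filter (fun e => e.1 ∈ A2 ∧ e.2 ∈ L) with hG2
    set G3 := FL.filter (fun e => e.1 ∈ A1) with hG3
    set G4 := F.filter (fun e => e.1 ∈ A1 ∧ e.2 ∈ L ∧ e ∉ FL) with hG4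
    set G5 := FR.filter (fun e => e.1 ∈ A2) with hG5
    set G6 := F.filter (fun e => e.1 ∈ A2 ∧ e.2 ∈ R ∧ e ∉ FR) with hG6
    have c1 : G1.card ≤ (A1.card + R.card) * k + A1.card :=
      ih A1 R G1 (fun e he => by
        rw [Finset.mem_product]; exact (Finset.mem_filter.1 he).2) (hN.mono (Finset.filter_subset _ _)) hRk
    have c2 : G2.card ≤ (A2.card + L.card) * k + A2.card :=
      ih A2 L G2 (fun e he => by
        rw [Finset.mem_product]; exact (Finset.mem_filter.1 he).2) (hN.mono (Finset.filter_subset _ _)) hLk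
    have c3 : G3.card ≤ L.card := by
      apply count_snd X hX
      · intro e he
        exact (Finset.mem_filter.1 (Finset.mem_filter.1 he).1).2.1
      · intro a a' b h1 h2
        have h1 := Finset.mem_filter.1 h1
        have h2 := Finset.mem_filter.1 h2
        exact hcL a a' b h1.2 h2.2 h1.1 h2.1
    have c5 : G5.card ≤ R.card := by
      apply count_snd X hX
      · intro e he
        exact (Finset.mem_filter.1 (Finset.mem_filter.1 he).1).2.1
      · intro a a' b h1 h2
        have h1 := Finset.mem_filter.1 h1
        have h2 := Finset.mem_filter.1 h2
        exact hcR a a' b h1.2 h2.2 h1.1 h2.1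
    have c4 : G4.card ≤ A1.card := by
      apply count_fst X hX
      · intro e he
        exact (Finset.mem_filter.1 he).2.1
      · intro a b b' h1 h2 h3
        have h1 := Finset.mem_filter.1 h1
        have h2 := Finset.mem_filter.1 h2
        exact h1.2.2.2 (Finset.mem_filter.2 ⟨h1.1, h1.2.2.1, b', h2.2.2.1, h3, h2.1⟩)
    have c6 : G6.card ≤ A2.card := by
      apply count_fst X hX
      · intro e he
        exact (Finset.mem_filter.1 he).2.1
      · intro a b b' h1 h2 h3
        have h1 := Finset.mem_filter.1 h1
        have h2 := Finset.mem_filter.1 h2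
        exact h2.2.2.2 (Finset.mem_filter.2 ⟨h2.1, h2.2.2.1, b, h1.2.2.1, h3, h1.1⟩)
    have hcov : F ⊆ G1 ∪ (G2 ∪ (G3 ∪ (G4 ∪ (G5 ∪ G6)))) := by
      intro e he
      have hAB := Finset.mem_product.1 (hF he)
      have o1 := hA _ hAB.1
      have o2 := hLR _ hAB.2
      simp only [Finset.mem_union, hG1, hG2, hG3, hG4, hG5, hG6, Finset.mem_filter]
      clear_value FL FR
      rcases o1 with o1 | o1 <;> rcases o2 with o2 | o2
      · by_cases q : e ∈ FL
        · exact Or.inr (Or.inr (Or.inl ⟨q, o1⟩))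
        · exact Or.inr (Or.inr (Or.inr (Or.inl ⟨he, o1, o2, q⟩)))
      · exact Or.inl ⟨he, o1, o2⟩
      · exact Or.inr (Or.inl ⟨he, o1, o2⟩)
      · by_cases q : e ∈ FR
        · exact Or.inr (Or.inr (Or.inr (Or.inr (Or.inl ⟨q, o1⟩))))
        · exact Or.inr (Or.inr (Or.inr (Or.inr (Or.inr ⟨he, o1, o2, q⟩))))
    have u0 := Finset.card_le_card hcov
    have u1 := Finset.card_union_le G1 (G2 ∪ (G3 ∪ (G4 ∪ (G5 ∪ G6))))
    have u2 := Finset.card_union_le G2 (G3 ∪ (G4 ∪ (G5 ∪ G6)))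
    have u3 := Finset.card_union_le G3 (G4 ∪ (G5 ∪ G6))
    have u4 := Finset.card_union_le G4 (G5 ∪ G6)
    have u5 := Finset.card_union_le G5 G6
    rw [← hAc, ← hs]
    have e : (A1.card + A2.card + (L.card + R.card)) * (k + 1) + (A1.card + A2.card) =
      ((A1.card + R.card) * k + A1.card) + ((A2.card + L.card) * k + A2.card) + L.card + A1.card
        + R.card + A2.card := by ring
    rw [e]
    omega

/-- cross product -/
def cr {V : Type*} (X Y : V → ℝ) (p q r : V) : ℝ := (X q - X p) * (Y r - Y p) - (Y q - Y p) * (X r - X p)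

/-- dot product of `u - v` and `w - v` -/
def dt {V : Type*} (X Y : V → ℝ) (u v w : V) : ℝ := (X u - X v) * (X w - X v) + (Y u - Y v) * (Y w - Y v)

theorem chain_contra {V : Type*} (X Y : V → ℝ) (s p q t : V) (h1 : X s < X p) (h2 : X p < X q)
    (h3 : X q < X t) (c1 : 0 < cr X Y s p q) (c2 : 0 < cr X Y p q t)
    (d1 : 0 < dt X Y p q t) (d2 : 0 < dt X Y q p s) : False := by
  unfold cr at c1 c2
  unfold dt at d1 d2
  obtain ⟨ex, hex⟩ : ∃ z, z = X q - X p := ⟨_, rfl⟩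
  obtain ⟨ey, hey⟩ : ∃ z, z = Y q - Y p := ⟨_, rfl⟩
  obtain ⟨ux, hux⟩ : ∃ z, z = X t - X q := ⟨_, rfl⟩
  obtain ⟨uy, huy⟩ : ∃ z, z = Y t - Y q := ⟨_, rfl⟩
  obtain ⟨vx, hvx⟩ : ∃ z, z = X s - X p := ⟨_, rfl⟩
  obtain ⟨vy, hvy⟩ : ∃ z, z = Y s - Y p := ⟨_, rfl⟩
  have c1' : 0 < ex * vy - ey * vx := by subst_vars; linarith
  have c2' : 0 < ex * uy - ey * ux := by subst_vars; linarith
  have d1' : ex * ux + ey * uy < 0 := by subst_vars; linarith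
  have d2' : 0 < ex * vx + ey * vy := by subst_vars; linarith
  have hex0 : 0 < ex := by linarith
  have hux0 : 0 < ux := by linarith
  have hvx0 : vx < 0 := by linarith
  have hsq : 0 < ex ^ 2 + ey ^ 2 := by positivity
  have i1 : (ex ^ 2 + ey ^ 2) * ux = ex * (ex * ux + ey * uy) - ey * (ex * uy - ey * ux) := by ring
  have i2 : (ex ^ 2 + ey ^ 2) * vx = ex * (ex * vx + ey * vy) - ey * (ex * vy - ey * vx) := by ring
  have j1 : 0 < (ex ^ 2 + ey ^ 2) * ux := by positivity
  have j2 : (ex ^ 2 + ey ^ 2) * vx < 0 := mul_neg_of_pos_of_neg hsq hvx0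
  have k1 : ex * (ex * ux + ey * uy) < 0 := mul_neg_of_pos_of_neg hex0 d1'
  have k2 : 0 < ex * (ex * vx + ey * vy) := mul_pos hex0 d2'
  rcases le_total 0 ey with h | h
  · have := mul_nonneg h c2'.le
    linarith
  · have := mul_nonneg (neg_nonneg.2 h) c1'.le
    linarith

theorem cone {ux uy vx vy wx wy : ℝ} (h1 : 0 ≤ ux * vy - uy * vx) (h2 : 0 < vx * wy - vy * wx)
    (h3 : 0 < ux * wy - uy * wx) (h4 : 0 < ux * wx + uy * wy) : 0 < vx * wx + vy * wy := by
  have : (ux * wy - uy * wx) * (vx * wx + vy * wy) =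
      (vx * wy - vy * wx) * (ux * wx + uy * wy) + (ux * vy - uy * vx) * (wx ^ 2 + wy ^ 2) := by ring
  have h5 : 0 < (ux * wy - uy * wx) * (vx * wx + vy * wy) := by rw [this]; positivity
  exact (pos_iff_pos_of_mul_pos h5).1 h3

/-- Rays from `o`: `u`, then `v`, then `w` counterclockwise. -/
theorem cone_pt {V : Type*} (X Y : V → ℝ) {o u v w : V} (h1 : 0 ≤ cr X Y o u v)
    (h2 : 0 < cr X Y o v w) (h3 : 0 < cr X Y o u w) (h4 : 0 < dt X Y u o w) :
    0 < dt X Y v o w := by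
  unfold cr at *; unfold dt at *
  exact cone h1 h2 h3 h4

/-- Rays from `o`: `w`, then `v`, then `u` counterclockwise. -/
theorem cone_pt' {V : Type*} (X Y : V → ℝ) {o u v w : V} (h1 : 0 ≤ cr X Y o v u)
    (h2 : 0 < cr X Y o w v) (h3 : 0 < cr X Y o w u) (h4 : 0 < dt X Y u o w) :
    0 < dt X Y v o w := by
  unfold cr at *; unfold dt at *
  have := cone (ux := X u - X o) (uy := -(Y u - Y o)) (vx := X v - X o) (vy := -(Y v - Y o))
    (wx := X w - X o) (wy := -(Y w - Y o)) (by linarith) (by linarith) (by linarith) (by linarith)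
  linarith

theorem quad {V : Type*} (X Y : V → ℝ) (p q r s : V)
    (c2 : 0 < cr X Y p q r) (c3 : 0 < cr X Y q r s)
    (c4 : 0 < cr X Y r s p) (c1 : 0 < cr X Y s p q)
    (d1 : 0 < dt X Y s p q) (d2 : 0 < dt X Y p q r) (d3 : 0 < dt X Y q r s)
    (d4 : 0 < dt X Y r s p) : False := by
  unfold cr at *; unfold dt at *
  -- coordinates relative to `p` along `q - p`
  obtain ⟨ex, hex⟩ : ∃ z, z = X q - X p := ⟨_, rfl⟩
  obtain ⟨ey, hey⟩ : ∃ z, z = Y q - Y p := ⟨_, rfl⟩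
  obtain ⟨fx, hfx⟩ : ∃ z, z = X r - X q := ⟨_, rfl⟩
  obtain ⟨fy, hfy⟩ : ∃ z, z = Y r - Y q := ⟨_, rfl⟩
  obtain ⟨gx, hgx⟩ : ∃ z, z = X s - X p := ⟨_, rfl⟩
  obtain ⟨gy, hgy⟩ : ∃ z, z = Y s - Y p := ⟨_, rfl⟩
  obtain ⟨a, ha⟩ : ∃ z, z = -(ex * fx + ey * fy) := ⟨_, rfl⟩
  obtain ⟨b, hb⟩ : ∃ z, z = ex * fy - ey * fx := ⟨_, rfl⟩
  obtain ⟨c, hc⟩ : ∃ z, z = ex * gx + ey * gy := ⟨_, rfl⟩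
  obtain ⟨d, hd⟩ : ∃ z, z = ex * gy - ey * gx := ⟨_, rfl⟩
  obtain ⟨N, hN⟩ : ∃ z, z = ex ^ 2 + ey ^ 2 := ⟨_, rfl⟩
  have ha0 : 0 < a := by subst_vars; linarith
  have hb0 : 0 < b := by subst_vars; linarith
  have hc0 : 0 < c := by subst_vars; linarith
  have hd0 : 0 < d := by subst_vars; linarith
  have hN0 : 0 < N := by
    rcases (show 0 ≤ N by rw [hN]; positivity).lt_or_eq with h | h
    · exact h
    · exfalso
      have e1 : ex = 0 := by
        have h1 := sq_nonneg ex
        have h2 := sq_nonneg ey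
        exact pow_eq_zero_iff (two_ne_zero) |>.1 (by linarith : ex ^ 2 = 0)
      have e2 : ey = 0 := by
        have h1 := sq_nonneg ex
        have h2 := sq_nonneg ey
        exact pow_eq_zero_iff (two_ne_zero) |>.1 (by linarith : ey ^ 2 = 0)
      rw [e1, e2] at hb; linarith
  obtain ⟨S, hS⟩ : ∃ z, z = N - a - c := ⟨_, rfl⟩
  have D3 : 0 < -(a * S) - b * (d - b) := by
    have := mul_pos hN0 d3
    have e : N * ((X q - X r) * (X s - X r) + (Y q - Y r) * (Y s - Y r)) =
      -(a * S) - b * (d - b) := by subst_vars; ring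
    linarith
  have D4 : 0 < -(c * S) - d * (b - d) := by
    have := mul_pos hN0 d4
    have e : N * ((X r - X s) * (X p - X s) + (Y r - Y s) * (Y p - Y s)) =
      -(c * S) - d * (b - d) := by subst_vars; ring
    linarith
  have C3 : 0 < -(a * (d - b)) + b * S := by
    have := mul_pos hN0 c3
    have e : N * ((X r - X q) * (Y s - Y q) - (Y r - Y q) * (X s - X q)) =
      -(a * (d - b)) + b * S := by subst_vars; ring
    linarith
  have C4 : 0 < S * d + c * (d - b) := by
    have := mul_pos hN0 c4
    have e : N * ((X s - X r) * (Y p - Y r) - (Y s - Y r) * (X p - X r)) =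
      S * d + c * (d - b) := by subst_vars; ring
    linarith
  rcases le_total 0 S with h | h <;> rcases le_total b d with h' | h'
  · linarith [mul_nonneg ha0.le h, mul_nonneg hb0.le (sub_nonneg.2 h')]
  · linarith [mul_nonneg hc0.le h, mul_nonneg hd0.le (sub_nonneg.2 h')]
  · linarith [mul_nonneg hb0.le (neg_nonneg.2 h), mul_nonneg ha0.le (sub_nonneg.2 h')]
  · linarith [mul_nonneg hd0.le (neg_nonneg.2 h), mul_nonneg hc0.le (sub_nonneg.2 h')]

open Classical in
/-- Edges inside one convex chain. -/
theorem chain_count {V : Type*} [Fintype V] (X Y : V → ℝ) (hX : Function.Injective X)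
    (adj : V → V → Prop) (hsymm : ∀ u v, adj u v → adj v u) (hirr : ∀ u, ¬ adj u u)
    (hd : ∀ u v w, adj u v → adj u w → v ≠ w → 0 < dt X Y u v w)
    (A : Finset V) (hA : ∀ p ∈ A, ∀ q ∈ A, ∀ r ∈ A, X p < X q → X q < X r → 0 < cr X Y p q r) :
    ((Finset.univ : Finset (V × V)).filter
      (fun e => e.1 ∈ A ∧ e.2 ∈ A ∧ adj e.1 e.2)).card ≤ 4 * A.card := by
  set G := (Finset.univ : Finset (V × V)).filter
    (fun e => e.1 ∈ A ∧ e.2 ∈ A ∧ adj e.1 e.2 ∧ X e.1 < X e.2) with hG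
  set G1 := G.filter (fun e => ¬ ∃ t ∈ A, adj e.1 t ∧ X e.2 < X t) with hG1
  set G2 := G.filter (fun e => ¬ ∃ t ∈ A, adj t e.2 ∧ X t < X e.1) with hG2
  have c1 : G1.card ≤ A.card := by
    apply count_fst X hX
    · intro e he
      exact (Finset.mem_filter.1 (Finset.mem_filter.1 he).1).2.1
    · intro a b b' h1 h2 h3
      have h1 := Finset.mem_filter.1 h1
      have h2 := (Finset.mem_filter.1 (Finset.mem_filter.1 h2).1).2
      exact h1.2 ⟨b', h2.2.1, h2.2.2.1, h3⟩
  have c2 : G2.card ≤ A.card := by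
    apply count_snd X hX
    · intro e he
      exact (Finset.mem_filter.1 (Finset.mem_filter.1 he).1).2.2.1
    · intro a a' b h1 h2 h3
      have h2 := Finset.mem_filter.1 h2
      have h1 := (Finset.mem_filter.1 (Finset.mem_filter.1 h1).1).2
      exact h2.2 ⟨a, h1.1, h1.2.2.1, h3⟩
  have hcov : G ⊆ G1 ∪ G2 := by
    intro e he
    by_contra hcon
    simp only [Finset.mem_union, hG1, hG2, Finset.mem_filter, he, true_and, not_or, not_not] at hcon
    obtain ⟨⟨t, ht, h1, h2⟩, s, hs, h3, h4⟩ := hcon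
    have he := (Finset.mem_filter.1 he).2
    obtain ⟨hp, hq, hpq, hlt⟩ := he
    refine chain_contra X Y s e.1 e.2 t h4 hlt h2 (hA _ hs _ hp _ hq h4 hlt)
      (hA _ hp _ hq _ ht hlt h2) (hd _ _ _ hpq h1 ?_) (hd _ _ _ (hsymm _ _ hpq) (hsymm _ _ h3) ?_)
    · intro h; rw [h] at h2; exact lt_irrefl _ h2
    · intro h; rw [h] at h4; exact lt_irrefl _ h4
  have hGc : G.card ≤ 2 * A.card := by
    have := Finset.card_le_card hcov
    have := Finset.card_union_le G1 G2
    omega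
  have hfin : (Finset.univ : Finset (V × V)).filter
      (fun e => e.1 ∈ A ∧ e.2 ∈ A ∧ adj e.1 e.2) ⊆ G ∪ G.image Prod.swap := by
    rintro ⟨u, v⟩ he
    obtain ⟨-, hu, hv, huv⟩ := Finset.mem_filter.1 he
    simp only at hu hv huv
    rcases lt_trichotomy (X u) (X v) with h | h | h
    · apply Finset.mem_union_left
      simp [hG, hu, hv, huv, h]
    · exact absurd (hX h ▸ huv) (hirr u)
    · apply Finset.mem_union_right
      simp [hG, hu, hv, hsymm _ _ huv, h]
  have := Finset.card_le_card hfin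
  have := Finset.card_union_le G (G.image Prod.swap)
  have := Finset.card_image_le (s := G) (f := Prod.swap)
  omega

theorem cr_rot {V : Type*} (X Y : V → ℝ) (p q r : V) : cr X Y q r p = cr X Y p q r := by
  unfold cr; ring
theorem cr_swap {V : Type*} (X Y : V → ℝ) (p q r : V) : cr X Y p r q = - cr X Y p q r := by
  unfold cr; ring
theorem cr_negY {V : Type*} (X Y : V → ℝ) (p q r : V) :
    cr X (fun v => - Y v) p q r = - cr X Y p q r := by
  unfold cr; ring
theorem dt_negY {V : Type*} (X Y : V → ℝ) (p q r : V) :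
    dt X (fun v => - Y v) p q r = dt X Y p q r := by
  unfold dt; ring

open Classical in
theorem core {V : Type*} [Fintype V] (X Y : V → ℝ) (hX : Function.Injective X)
    (adj : V → V → Prop) (hsymm : ∀ u v, adj u v → adj v u) (hirr : ∀ u, ¬ adj u u)
    (hd : ∀ u v w, adj u v → adj u w → v ≠ w → 0 < dt X Y u v w)
    (hV : ∀ p u v u' v', X u < X p → X p < X v → X u' < X p → X p < X v' →
      0 ≤ cr X Y u v p → cr X Y u' v' p ≤ 0 → False) (k : ℕ) (hk : Fintype.card V ≤ 2 ^ k) :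
    ((Finset.univ : Finset (V × V)).filter (fun e => adj e.1 e.2)).card ≤
      2 * (Fintype.card V * k) + 6 * Fintype.card V := by
  set A := (Finset.univ : Finset V).filter
    (fun p => ∀ u v, X u < X p → X p < X v → cr X Y u v p < 0) with hA
  set B := (Finset.univ : Finset V).filter
    (fun p => ¬ ∀ u v, X u < X p → X p < X v → cr X Y u v p < 0) with hB
  have hAB : A.card + B.card = Fintype.card V := Finset.card_filter_add_card_filter_not _
  have hA' : ∀ p ∈ A, ∀ u v, X u < X p → X p < X v → cr X Y u v p < 0 := fun p hp =>
    (Finset.mem_filter.1 hp).2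
  have hB' : ∀ p ∈ B, ∀ u v, X u < X p → X p < X v → 0 < cr X Y u v p := by
    intro p hp u v h1 h2
    have := (Finset.mem_filter.1 hp).2
    push Not at this
    obtain ⟨u', v', h3, h4, h5⟩ := this
    by_contra h
    exact hV p u' v' u v h3 h4 h1 h2 h5 (not_lt.1 h)
  have mem : ∀ p, p ∈ A ∨ p ∈ B := by
    intro p
    simp only [hA, hB, Finset.mem_filter, Finset.mem_univ, true_and]
    exact Classical.em _
  have hdisj : ∀ p ∈ A, p ∉ B := by
    intro p h1 h2
    exact (Finset.mem_filter.1 h2).2 (Finset.mem_filter.1 h1).2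
  have f1 : ∀ p ∈ A, ∀ q ∈ A, ∀ r ∈ A, X p < X q → X q < X r → 0 < cr X Y p q r := by
    intro p _ q hq r _ h1 h2
    have := hA' q hq p r h1 h2
    rw [cr_swap] at this; linarith
  have f2 : ∀ p ∈ B, ∀ q ∈ B, ∀ r ∈ B, X p < X q → X q < X r →
      0 < cr X (fun v => - Y v) p q r := by
    intro p _ q hq r _ h1 h2
    have := hB' q hq p r h1 h2
    rw [cr_swap] at this; rw [cr_negY]; linarith
  have f3 : ∀ a ∈ A, ∀ a' ∈ A, ∀ b ∈ B, X a < X a' → 0 < cr X Y a a' b := by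
    intro a ha a' ha' b hb h
    rcases lt_trichotomy (X b) (X a) with h1 | h1 | h1
    · have := hA' a ha b a' h1 h
      rw [cr_rot X Y a b a', cr_swap] at this; linarith
    · exact absurd hb (hX h1 ▸ hdisj a ha)
    · rcases lt_trichotomy (X b) (X a') with h2 | h2 | h2
      · exact hB' b hb a a' h1 h2
      · exact absurd hb (hX h2 ▸ hdisj a' ha')
      · have := hA' a' ha' a b h h2
        rw [cr_swap] at this; linarith
  have f4 : ∀ b ∈ B, ∀ b' ∈ B, ∀ a ∈ A, X b < X b' → cr X Y b b' a < 0 := by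
    intro a ha a' ha' b hb h
    rcases lt_trichotomy (X b) (X a) with h1 | h1 | h1
    · have := hB' a ha b a' h1 h
      rw [cr_rot X Y a b a', cr_swap] at this; linarith
    · exact absurd ha (hX h1 ▸ hdisj b hb)
    · rcases lt_trichotomy (X b) (X a') with h2 | h2 | h2
      · exact hA' b hb a a' h1 h2
      · exact absurd ha' (hX h2 ▸ hdisj b hb)
      · have := hB' a' ha' a b h h2
        rw [cr_swap] at this; linarith
  have f1' : ∀ p ∈ A, ∀ q ∈ A, ∀ r ∈ A, X p < X q → X q ≤ X r → 0 ≤ cr X Y p q r := by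
    intro p hp q hq r hr h1 h2
    rcases h2.lt_or_eq with h | h
    · exact (f1 p hp q hq r hr h1 h).le
    · rw [hX h]; unfold cr; apply le_of_eq; ring
  have f1'' : ∀ p ∈ A, ∀ q ∈ A, ∀ r ∈ A, X p ≤ X q → X q < X r → 0 ≤ cr X Y p q r := by
    intro p hp q hq r hr h1 h2
    rcases h1.lt_or_eq with h | h
    · exact (f1 p hp q hq r hr h h2).le
    · rw [hX h]; unfold cr; apply le_of_eq; ring
  have f2' : ∀ p ∈ B, ∀ q ∈ B, ∀ r ∈ B, X p < X q → X q ≤ X r → cr X Y p q r ≤ 0 := by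
    intro p hp q hq r hr h1 h2
    rcases h2.lt_or_eq with h | h
    · have := f2 p hp q hq r hr h1 h
      rw [cr_negY] at this; linarith
    · rw [hX h]; unfold cr; apply le_of_eq; ring
  have f2'' : ∀ p ∈ B, ∀ q ∈ B, ∀ r ∈ B, X p ≤ X q → X q < X r → cr X Y p q r ≤ 0 := by
    intro p hp q hq r hr h1 h2
    rcases h1.lt_or_eq with h | h
    · have := f2 p hp q hq r hr h h2
      rw [cr_negY] at this; linarith
    · rw [hX h]; unfold cr; apply le_of_eq; ring
  have cA := chain_count X Y hX adj hsymm hirr hd A f1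
  have cB := chain_count X (fun v => - Y v) hX adj hsymm hirr
    (fun u v w h1 h2 h3 => by rw [dt_negY]; exact hd u v w h1 h2 h3) B f2
  set F := (Finset.univ : Finset (V × V)).filter
    (fun e => e.1 ∈ A ∧ e.2 ∈ B ∧ adj e.1 e.2) with hF
  have hFm : ∀ a b, (a, b) ∈ F ↔ a ∈ A ∧ b ∈ B ∧ adj a b := by
    intro a b; simp [hF]
  have hFs : F ⊆ A ×ˢ B := by
    rintro ⟨a, b⟩ h
    rw [Finset.mem_product]
    exact ⟨((hFm a b).1 h).1, ((hFm a b).1 h).2.1⟩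
  have hne : ∀ {u v}, X u < X v → u ≠ v := by
    rintro u v h rfl; exact lt_irrefl _ h
  have hNo : NoPat X F := by
    rintro a a' b b' haa hbb h1 h2 ⟨b2, p1, p2, p3⟩ ⟨a3, q1, q2, q3⟩ ⟨b3, r1, r2, r3⟩
      ⟨a2, s1, s2, s3⟩
    rw [hFm] at h1 h2 p3 q3 r3 s3
    obtain ⟨ha, hb, hab⟩ := h1
    obtain ⟨ha', hb', hab'⟩ := h2
    obtain ⟨-, hb2, hab2⟩ := p3
    obtain ⟨ha3, -, hab3⟩ := q3
    obtain ⟨-, hb3, ha'b3⟩ := r3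
    obtain ⟨ha2, -, ha2b'⟩ := s3
    -- quadrilateral a, a', b', b
    have g1 := f3 a ha a' ha' b hb haa
    have g2 := f3 a ha a' ha' b' hb' haa
    have g3 := f4 b hb b' hb' a ha hbb
    have g4 := f4 b hb b' hb' a' ha' hbb
    -- acute angles
    have e1 : 0 < dt X Y a' a b := by
      refine cone_pt X Y (u := a3) (f1' a ha a3 ha3 a' ha' q1 q2) g1
        (f3 a ha a3 ha3 b hb q1) ?_
      have := hd b a a3 (hsymm _ _ hab) (hsymm _ _ hab3) (hne q1)
      unfold dt at *; linarith
    have e2 : 0 < dt X Y a a' b' := by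
      have k1 := f1'' a ha a2 ha2 a' ha' s1 s2
      have k2 := f3 a2 ha2 a' ha' b' hb' s2
      refine cone_pt' X Y (u := a2) ?_ ?_ ?_ ?_
      · unfold cr at *; linarith
      · unfold cr at *; linarith
      · unfold cr at *; linarith
      · have := hd b' a' a2 (hsymm _ _ hab') (hsymm _ _ ha2b') (hne s2).symm
        unfold dt at *; linarith
    have e3 : 0 < dt X Y b' b a := by
      have k1 := f2' b hb b2 hb2 b' hb' p1 p2
      have k2 := f4 b hb b2 hb2 a ha p1
      refine cone_pt' X Y (u := b2) ?_ ?_ ?_ ?_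
      · unfold cr at *; linarith
      · unfold cr at *; linarith
      · unfold cr at *; linarith
      · have := hd a b b2 hab hab2 (hne p1)
        unfold dt at *; linarith
    have e4 : 0 < dt X Y b b' a' := by
      have k1 := f2'' b hb b3 hb3 b' hb' r1 r2
      have k2 := f4 b3 hb3 b' hb' a' ha' r2
      refine cone_pt X Y (u := b3) ?_ ?_ ?_ ?_
      · unfold cr at *; linarith
      · unfold cr at *; linarith
      · unfold cr at *; linarith
      · have := hd a' b' b3 hab' ha'b3 (hne r2).symm
        unfold dt at *; linarith
    refine quad X Y a a' b' b g2 ?_ ?_ ?_ ?_ e2 ?_ e3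
    · unfold cr at *; linarith
    · unfold cr at *; linarith
    · unfold cr at *; linarith
    · unfold dt at *; linarith
    · unfold dt at *; linarith
  have cF := comb X hX k A B F hFs hNo (by omega)
  have hcov : (Finset.univ : Finset (V × V)).filter (fun e => adj e.1 e.2) ⊆
      ((Finset.univ : Finset (V × V)).filter (fun e => e.1 ∈ A ∧ e.2 ∈ A ∧ adj e.1 e.2)) ∪
      (((Finset.univ : Finset (V × V)).filter (fun e => e.1 ∈ B ∧ e.2 ∈ B ∧ adj e.1 e.2)) ∪
      (F ∪ F.image Prod.swap)) := by
    rintro ⟨u, v⟩ he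
    have he : adj u v := (Finset.mem_filter.1 he).2
    have he' := hsymm _ _ he
    have m1 := mem u
    have m2 := mem v
    simp only [Finset.mem_union, Finset.mem_filter, Finset.mem_univ, true_and, hFm,
      Finset.mem_image, Prod.exists, Prod.swap_prod_mk, Prod.mk.injEq]
    rcases m1 with m1 | m1 <;> rcases m2 with m2 | m2
    · tauto
    · tauto
    · right; right; right
      exact ⟨v, u, ⟨m2, m1, he'⟩, rfl, rfl⟩
    · tauto
  have u0 := Finset.card_le_card hcov
  refine u0.trans ?_
  refine (Finset.card_union_le _ _).trans ?_
  have u2 := Finset.card_union_le ((Finset.univ : Finset (V × V)).filter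
    (fun e => e.1 ∈ B ∧ e.2 ∈ B ∧ adj e.1 e.2)) (F ∪ F.image Prod.swap)
  have u3 := Finset.card_union_le F (F.image Prod.swap)
  have u4 := Finset.card_image_le (s := F) (f := Prod.swap)
  rw [hAB] at cF
  omega

theorem hull_contra (P : Set (EuclideanSpace ℝ (Fin 2))) (t : ℝ)
    (X Y : EuclideanSpace ℝ (Fin 2) → ℝ) (hX : X = fun v => v 0 + t * v 1)
    (hY : Y = fun v => v 1 - t * v 0) (p u v u' v' : EuclideanSpace ℝ (Fin 2))
    (hp : p ∈ (convexHull ℝ P).extremePoints ℝ) (hu : u ∈ P) (hv : v ∈ P) (hu' : u' ∈ P)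
    (hv' : v' ∈ P) (h1 : X u < X p) (h2 : X p < X v) (h3 : X u' < X p) (h4 : X p < X v')
    (c1 : 0 ≤ cr X Y u v p) (c2 : cr X Y u' v' p ≤ 0) : False := by
  have hXl : ∀ (a b : ℝ) x y, X (a • x + b • y) = a * X x + b * X y := by
    intro a b x y; simp [hX]; ring
  have hYl : ∀ (a b : ℝ) x y, Y (a • x + b • y) = a * Y x + b * Y y := by
    intro a b x y; simp [hY]; ring
  have hinj : ∀ x y, X x = X y → Y x = Y y → x = y := by
    intro x y e1 e2
    simp only [hX] at e1
    simp only [hY] at e2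
    have hpos : 0 < 1 + t ^ 2 := by positivity
    have k0 : x 0 = y 0 := by
      have : (1 + t ^ 2) * (x 0 - y 0) = 0 := by linear_combination e1 - t * e2
      rcases mul_eq_zero.1 this with h | h <;> linarith
    have k1 : x 1 = y 1 := by
      have : (1 + t ^ 2) * (x 1 - y 1) = 0 := by linear_combination t * e1 + e2
      rcases mul_eq_zero.1 this with h | h <;> linarith
    ext i
    fin_cases i
    · exact k0
    · exact k1
  obtain ⟨hpH, hext⟩ := mem_extremePoints.1 hp
  have foot : ∀ u v, u ∈ P → v ∈ P → X u < X p → X p < X v →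
      ∃ q ∈ convexHull ℝ P, X q = X p ∧ Y q ≠ Y p ∧
        (X v - X u) * (Y p - Y q) = cr X Y u v p := by
    intro u v hu hv h1 h2
    have hD : 0 < X v - X u := by linarith
    obtain ⟨s, hs⟩ : ∃ s, s = (X p - X u) / (X v - X u) := ⟨_, rfl⟩
    have hs' : s * (X v - X u) = X p - X u := by rw [hs]; field_simp
    have hs0 : 0 < s := by rw [hs]; apply div_pos <;> linarith
    have hs1 : s < 1 := by rw [hs, div_lt_one hD]; linarith
    have hseg : (1 - s) • u + s • v ∈ openSegment ℝ u v :=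
      ⟨1 - s, s, by linarith, hs0, by ring, rfl⟩
    have huH := subset_convexHull ℝ P hu
    have hvH := subset_convexHull ℝ P hv
    have eX : X ((1 - s) • u + s • v) = X p := by rw [hXl]; linarith
    refine ⟨(1 - s) • u + s • v, (convex_convexHull ℝ P).openSegment_subset huH hvH hseg, eX,
      ?_, ?_⟩
    · intro hYq
      have := hinj _ _ eX hYq
      rw [this] at hseg
      have := (hext u huH v hvH hseg).1
      rw [this] at h1
      exact lt_irrefl _ h1
    · rw [hYl]; unfold cr; linear_combination (-(Y v - Y u)) * hs'
  obtain ⟨q, hq, q1, q2, q3⟩ := foot u v hu hv h1 h2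
  obtain ⟨r, hr, r1, r2, r3⟩ := foot u' v' hu' hv' h3 h4
  have a1 : Y q < Y p := by
    apply lt_of_le_of_ne _ q2
    by_contra h
    have := mul_neg_of_pos_of_neg (show 0 < X v - X u by linarith)
      (show Y p - Y q < 0 by linarith)
    linarith
  have a2 : Y p < Y r := by
    apply lt_of_le_of_ne _ r2.symm
    by_contra h
    have := mul_pos (show 0 < X v' - X u' by linarith) (show 0 < Y p - Y r by linarith)
    linarith
  have hD : 0 < Y r - Y q := by linarith
  obtain ⟨s, hs⟩ : ∃ s, s = (Y p - Y q) / (Y r - Y q) := ⟨_, rfl⟩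
  have hs' : s * (Y r - Y q) = Y p - Y q := by rw [hs]; field_simp
  have hs0 : 0 < s := by rw [hs]; apply div_pos <;> linarith
  have hs1 : s < 1 := by rw [hs, div_lt_one hD]; linarith
  have : (1 - s) • q + s • r = p := by
    apply hinj
    · rw [hXl, q1, r1]; ring
    · rw [hYl]; linarith
  have := (hext q hq r hr ⟨1 - s, s, by linarith, hs0, by ring, this⟩).1
  exact q2 (by rw [this])

theorem dot_of_angle (u v w : EuclideanSpace ℝ (Fin 2))
    (h : EuclideanGeometry.angle u v w < Real.pi / 2) :
    0 < (u 0 - v 0) * (w 0 - v 0) + (u 1 - v 1) * (w 1 - v 1) := by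
  unfold EuclideanGeometry.angle InnerProductGeometry.angle at h
  rw [Real.arccos_lt_pi_div_two] at h
  have h2 : 0 < inner ℝ (u -ᵥ v) (w -ᵥ v) := by
    by_contra hc
    exact absurd h (not_lt.2 (div_nonpos_of_nonpos_of_nonneg (not_lt.1 hc) (by positivity)))
  simp [PiLp.inner_apply, Fin.sum_univ_two] at h2
  linarith

open Classical in
theorem generic (P : Finset (EuclideanSpace ℝ (Fin 2))) :
    ∃ t : ℝ, ∀ p ∈ P, ∀ q ∈ P, p 0 + t * p 1 = q 0 + t * q 1 → p = q := by
  obtain ⟨t, ht⟩ := Infinite.exists_notMem_finset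
    ((P ×ˢ P).image (fun e => -(e.1 0 - e.2 0) / (e.1 1 - e.2 1)))
  refine ⟨t, fun p hp q hq h => ?_⟩
  by_cases h1 : p 1 = q 1
  · have h0 : p 0 = q 0 := by rw [h1] at h; linarith
    ext i
    fin_cases i
    · exact h0
    · exact h1
  · exfalso
    apply ht
    rw [Finset.mem_image]
    refine ⟨(p, q), Finset.mem_product.2 ⟨hp, hq⟩, ?_⟩
    have : p 1 - q 1 ≠ 0 := sub_ne_zero.2 h1
    rw [div_eq_iff this]
    linarith

open Classical in
theorem nat_bound (P : Finset (EuclideanSpace ℝ (Fin 2)))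
    (E : Set (EuclideanSpace ℝ (Fin 2) × EuclideanSpace ℝ (Fin 2)))
    (hP : ConvexPosition (P : Set (EuclideanSpace ℝ (Fin 2))))
    (hE : IsLGG (P : Set (EuclideanSpace ℝ (Fin 2))) E) (k : ℕ) (hk : P.card ≤ 2 ^ k) :
    E.ncard ≤ 2 * (P.card * k) + 6 * P.card := by
  obtain ⟨t, ht⟩ := generic P
  obtain ⟨hE1, hE2, hE3⟩ := hE
  have hmain := core (V := P) (fun v => v.1 0 + t * v.1 1) (fun v => v.1 1 - t * v.1 0)
    (fun p q h => Subtype.ext (ht p.1 p.2 q.1 q.2 h))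
    (fun u v => (u.1, v.1) ∈ E) (fun u v h => hE2 _ _ h)
    (fun u h => (hE1 _ h).2.2 rfl)
    (by
      intro u v w h1 h2 h3
      have := dot_of_angle _ _ _ (hE3 u.1 v.1 w.1 h1 h2 (fun h => h3 (Subtype.ext h))).1
      have h5 : 0 < 1 + t ^ 2 := by positivity
      have := mul_pos h5 this
      unfold dt
      linarith)
    (by
      intro p u v u' v' h1 h2 h3 h4 h5 h6
      exact hull_contra (P : Set _) t _ _ rfl rfl p.1 u.1 v.1 u'.1 v'.1 (hP p.1 p.2) u.2 v.2 u'.2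
        v'.2 h1 h2 h3 h4 h5 h6) k (by simpa using hk)
  rw [Fintype.card_coe] at hmain
  refine le_trans ?_ hmain
  have hsub : E ⊆ ((((Finset.univ : Finset (P × P)).filter
      (fun e => (e.1.1, e.2.1) ∈ E)).image (fun e => (e.1.1, e.2.1)) :
        Finset (EuclideanSpace ℝ (Fin 2) × EuclideanSpace ℝ (Fin 2))) : Set _) := by
    rintro ⟨u, v⟩ he
    have := hE1 _ he
    rw [Finset.mem_coe, Finset.mem_image]
    exact ⟨(⟨u, this.1⟩, ⟨v, this.2.1⟩), Finset.mem_filter.2 ⟨Finset.mem_univ _, he⟩, rfl⟩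
  refine (Set.ncard_le_ncard hsub (Finset.finite_toSet _)).trans ?_
  rw [Set.ncard_coe_finset]
  exact Finset.card_image_le

end LGGaux

/-- There is an absolute constant `C` such that every locally Gabriel graph on a set of
`n ≥ 2` points in convex position in the plane has at most `2n·log₂ n + C·n` edges.
(The edge set is symmetric, so it counts each edge twice; whence the factor `2` on the
right.) -/
theorem lgg_convex_position_edge_bound :
    ∃ C : ℝ, ∀ (P : Finset (EuclideanSpace ℝ (Fin 2)))
      (E : Set (EuclideanSpace ℝ (Fin 2) × EuclideanSpace ℝ (Fin 2))),
      2 ≤ P.card →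
      ConvexPosition (P : Set (EuclideanSpace ℝ (Fin 2))) →
      IsLGG (P : Set (EuclideanSpace ℝ (Fin 2))) E →
      (E.ncard : ℝ) ≤ 2 * (2 * P.card * Real.logb 2 P.card + C * P.card) := by
  refine ⟨4, fun P E hn hP hE => ?_⟩
  have h := LGGaux.nat_bound P E hP hE (Nat.log 2 P.card + 1)
    (Nat.lt_pow_succ_log_self (by norm_num) _).le
  have hR : (E.ncard : ℝ) ≤ 2 * (P.card * ((Nat.log 2 P.card : ℕ) + 1)) + 6 * P.card := by
    exact_mod_cast h
  have hlog : ((Nat.log 2 P.card : ℕ) : ℝ) ≤ Real.logb 2 P.card := by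
    exact_mod_cast Real.natLog_le_logb P.card 2
  have hn0 : (0 : ℝ) ≤ P.card := by positivity
  have hl0 : (0 : ℝ) ≤ Real.logb 2 P.card := le_trans (by positivity) hlog
  have := mul_le_mul_of_nonneg_left hlog hn0
  have := mul_nonneg hn0 hl0
  linarith
end

section
/- Let G be a path-restricted ordered bipartite graph and let v be a vertex of G. Then for every vertex w of G there is at most one decreasing forward path in G from v to w; equivalently, two decreasing forward paths originating at v never meet again after diverging, so the union T_r(v) of all decreasing forward paths from v is a tree. The same statements hold for increasing forward paths and T_l(v). -/
open List

/-- A decreasing forward path: a path whose `U`-vertices and `V`-vertices are both visited in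
strictly decreasing order. -/
def IsDecForwardPath {α β : Type*} [Preorder α] [Preorder β]
    (E : Set (α × β)) (ws : List (α ⊕ β)) : Prop :=
  IsPathList E ws ∧ (uVerts ws).Chain' (· > ·) ∧ (vVerts ws).Chain' (· > ·)

/-- An increasing forward path: a path whose `U`-vertices and `V`-vertices are both visited in
strictly increasing order. -/
def IsIncForwardPath {α β : Type*} [Preorder α] [Preorder β]
    (E : Set (α × β)) (ws : List (α ⊕ β)) : Prop :=
  IsPathList E ws ∧ (uVerts ws).Chain' (· < ·) ∧ (vVerts ws).Chain' (· < ·)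

@[simp] lemma fmL_aux {α β : Type*} (b : β) (l : List (α ⊕ β)) :
    List.filterMap Sum.getLeft? (Sum.inr b :: l) = List.filterMap Sum.getLeft? l := rfl

@[simp] lemma fmR_aux {α β : Type*} (b : α) (l : List (α ⊕ β)) :
    List.filterMap Sum.getRight? (Sum.inl b :: l) = List.filterMap Sum.getRight? l := rfl

lemma exists_greatest_aux {γ : Type*} [LinearOrder γ] (l : List γ) (h : ∃ f, f ∈ l) :
    ∃ g, ListGreatest l g := by
  classical
  obtain ⟨f, hf⟩ := h
  obtain ⟨g, hg, hg2⟩ := l.toFinset.exists_max_image id ⟨f, by simpa using hf⟩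
  exact ⟨g, by simpa using hg, fun y hy => hg2 y (by simpa using hy)⟩

lemma coreL {α β : Type*} [LinearOrder α] [LinearOrder β]
    (E : Set (α × β)) (hG : IsPRBG E) (a : α) (x y : β) (p : List (α ⊕ β))
    (hp : IsIncForwardPath E (Sum.inl a :: Sum.inr x :: p)) (hne : p ≠ [])
    (hy : (a, y) ∈ E) (hxy : x < y) : ∀ f ∈ vVerts (Sum.inl a :: Sum.inr x :: p), f < y := by
  intro f hf
  by_contra hfy
  push Not at hfy
  obtain ⟨g, hg⟩ := exists_greatest_aux (vVerts (Sum.inl a :: Sum.inr x :: p)) ⟨f, hf⟩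
  apply hG _ ⟨hp.1, Or.inl hp.2⟩
  have h1 := List.isChain_iff_pairwise.1 hp.2.1
  have h2 := List.isChain_iff_pairwise.1 hp.2.2
  simp [uVerts, vVerts] at h1 h2
  left
  refine ⟨a, x, g, x, y, ?_, ?_, hg, ?_, hy, hxy.le, hfy.trans (hg.2 f hf), hxy⟩
  · simp only [ListLeast, uVerts, vVerts]
    simp
    intro b hb
    first | exact (h1.1 b hb).le | exact (h2.1 b hb).le
  · simp only [ListLeast, uVerts, vVerts]
    simp
    intro b hb
    first | exact (h1.1 b hb).le | exact (h2.1 b hb).le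
  · obtain ⟨c, p', rfl⟩ := List.exists_cons_of_ne_nil hne
    simp only [ListLeast, uVerts, vVerts, internalVerts]
    simp
    intro b hb
    have hb' := List.mem_of_mem_dropLast hb
    first | exact (h1.1 b hb').le | exact (h2.1 b hb').le

lemma keyL {α β : Type*} [LinearOrder α] [LinearOrder β]
    (E : Set (α × β)) (hG : IsPRBG E) (v : α ⊕ β) (a : α) (x y : β) (p q : List (α ⊕ β))
    (hp : IsIncForwardPath E (Sum.inl a :: Sum.inr x :: p))
    (hq : IsIncForwardPath E (Sum.inl a :: Sum.inr y :: q))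
    (hpl : (Sum.inr x :: p).getLast? = some v) (hql : (Sum.inr y :: q).getLast? = some v)
    (hxy : x < y) : False := by
  have hyE : (a, y) ∈ E := by
    have := hq.1.2.1
    simp only [List.Chain', List.isChain_cons_cons] at this
    exact this.1
  have hqge : ∀ e, Sum.inr e ∈ Sum.inr y :: q → y ≤ e := by
    intro e he
    have h1 := List.isChain_iff_pairwise.1 hq.2.1
    have h2 := List.isChain_iff_pairwise.1 hq.2.2
    simp [uVerts, vVerts] at h1 h2 he
    rcases he with rfl | he
    · exact le_rfl
    · first | exact (h1.1 _ he).le | exact (h2.1 _ he).le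
  have hvp := List.mem_of_getLast? hpl
  have hvq := List.mem_of_getLast? hql
  have hne : p ≠ [] := by
    rintro rfl
    simp at hvp
    subst hvp
    exact absurd (hqge _ hvq) (not_le.2 hxy)
  have hc := coreL E hG a x y p hp hne hyE hxy
  obtain ⟨d, rfl⟩ | ⟨d, rfl⟩ : (∃ d, v = Sum.inr d) ∨ (∃ d, v = Sum.inl d) := by
    cases v <;> simp
  · have h3 := hc d (by simp only [uVerts, vVerts]; simpa using hvp)
    exact absurd (hqge _ hvq) (not_le.2 h3)
  · obtain ⟨q', hq'⟩ : ∃ q', Sum.inr y :: q = q' ++ [Sum.inl d] := List.getLast?_eq_some_iff.1 hql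
    obtain ⟨p', hp'⟩ : ∃ p', Sum.inr x :: p = p' ++ [Sum.inl d] := List.getLast?_eq_some_iff.1 hpl
    have hq'ne : q' ≠ [] := by
      rintro rfl
      simp at hq'
    obtain ⟨q0, z, rfl⟩ : ∃ q0 z, q' = q0 ++ [z] :=
      ⟨_, _, (List.dropLast_append_getLast hq'ne).symm⟩
    have hadj : BipAdj E z (Sum.inl d) := by
      have := hq.1.2.1
      rw [hq'] at this
      simp only [List.Chain', List.isChain_append, List.isChain_cons] at this
      have := this.2.2.2 z (by simp) (Sum.inl d) (by simp)
      exact this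
    obtain ⟨e, rfl⟩ : ∃ e, z = Sum.inr e := by
      cases z <;> simp_all [BipAdj]
    have hye : y ≤ e := hqge e (by rw [hq']; simp)
    have hp2 : IsIncForwardPath E (Sum.inl a :: Sum.inr x :: (p ++ [Sum.inr e])) := by
      have hcons : Sum.inl a :: Sum.inr x :: (p ++ [Sum.inr e]) = (Sum.inl a :: Sum.inr x :: p) ++ [Sum.inr e] := by simp
      rw [hcons]
      refine ⟨⟨by simp, ?_, ?_⟩, ?_, ?_⟩
      · have hch := hp.1.2.1
        simp only [List.Chain'] at hch ⊢
        rw [List.isChain_append]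
        refine ⟨hch, by simp, ?_⟩
        intro s hs t ht
        have hs' : s = Sum.inl d := by
          rw [hp', ← List.cons_append, List.getLast?_append] at hs
          simp at hs
          exact hs.symm
        simp at ht
        subst ht
        subst hs'
        simpa [BipAdj] using hadj
      · rw [List.nodup_append]
        refine ⟨hp.1.2.2, by simp, ?_⟩
        intro s hs t ht hst
        simp only [List.mem_singleton] at ht
        subst ht
        subst hst
        exact absurd (hc e (by simp only [uVerts, vVerts]; simpa using hs)) (not_lt.2 hye)
      · have := hp.2.1
        simpa [uVerts, vVerts, List.Chain'] using this
      · have h5 := hp.2.2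
        simp only [List.Chain', vVerts, List.filterMap_append] at h5 ⊢
        rw [List.isChain_append]
        refine ⟨h5, by simp, ?_⟩
        intro s hs t ht
        have h6 := hc s (List.mem_of_getLast? hs)
        simp at ht
        subst ht
        exact h6.trans_le hye
    have h4 := coreL E hG a x y _ hp2 (by simp) hyE hxy e (by simp [uVerts, vVerts])
    exact absurd h4 (not_lt.2 hye)

lemma coreR {α β : Type*} [LinearOrder α] [LinearOrder β]
    (E : Set (α × β)) (hG : IsPRBG E) (a : β) (x y : α) (p : List (α ⊕ β))
    (hp : IsIncForwardPath E (Sum.inr a :: Sum.inl x :: p)) (hne : p ≠ [])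
    (hy : (y, a) ∈ E) (hxy : x < y) : ∀ f ∈ uVerts (Sum.inr a :: Sum.inl x :: p), f < y := by
  intro f hf
  by_contra hfy
  push Not at hfy
  obtain ⟨g, hg⟩ := exists_greatest_aux (uVerts (Sum.inr a :: Sum.inl x :: p)) ⟨f, hf⟩
  apply hG _ ⟨hp.1, Or.inl hp.2⟩
  have h1 := List.isChain_iff_pairwise.1 hp.2.1
  have h2 := List.isChain_iff_pairwise.1 hp.2.2
  simp [uVerts, vVerts] at h1 h2
  right
  refine ⟨a, x, g, x, y, ?_, ?_, hg, ?_, hy, hxy.le, hfy.trans (hg.2 f hf), hxy⟩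
  · simp only [ListLeast, uVerts, vVerts]
    simp
    intro b hb
    first | exact (h1.1 b hb).le | exact (h2.1 b hb).le
  · simp only [ListLeast, uVerts, vVerts]
    simp
    intro b hb
    first | exact (h1.1 b hb).le | exact (h2.1 b hb).le
  · obtain ⟨c, p', rfl⟩ := List.exists_cons_of_ne_nil hne
    simp only [ListLeast, uVerts, vVerts, internalVerts]
    simp
    intro b hb
    have hb' := List.mem_of_mem_dropLast hb
    first | exact (h1.1 b hb').le | exact (h2.1 b hb').le

lemma keyR {α β : Type*} [LinearOrder α] [LinearOrder β]
    (E : Set (α × β)) (hG : IsPRBG E) (v : α ⊕ β) (a : β) (x y : α) (p q : List (α ⊕ β))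
    (hp : IsIncForwardPath E (Sum.inr a :: Sum.inl x :: p))
    (hq : IsIncForwardPath E (Sum.inr a :: Sum.inl y :: q))
    (hpl : (Sum.inl x :: p).getLast? = some v) (hql : (Sum.inl y :: q).getLast? = some v)
    (hxy : x < y) : False := by
  have hyE : (y, a) ∈ E := by
    have := hq.1.2.1
    simp only [List.Chain', List.isChain_cons_cons] at this
    exact this.1
  have hqge : ∀ e, Sum.inl e ∈ Sum.inl y :: q → y ≤ e := by
    intro e he
    have h1 := List.isChain_iff_pairwise.1 hq.2.1
    have h2 := List.isChain_iff_pairwise.1 hq.2.2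
    simp [uVerts, vVerts] at h1 h2 he
    rcases he with rfl | he
    · exact le_rfl
    · first | exact (h1.1 _ he).le | exact (h2.1 _ he).le
  have hvp := List.mem_of_getLast? hpl
  have hvq := List.mem_of_getLast? hql
  have hne : p ≠ [] := by
    rintro rfl
    simp at hvp
    subst hvp
    exact absurd (hqge _ hvq) (not_le.2 hxy)
  have hc := coreR E hG a x y p hp hne hyE hxy
  obtain ⟨d, rfl⟩ | ⟨d, rfl⟩ : (∃ d, v = Sum.inl d) ∨ (∃ d, v = Sum.inr d) := by
    cases v <;> simp
  · have h3 := hc d (by simp only [uVerts, vVerts]; simpa using hvp)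
    exact absurd (hqge _ hvq) (not_le.2 h3)
  · obtain ⟨q', hq'⟩ : ∃ q', Sum.inl y :: q = q' ++ [Sum.inr d] := List.getLast?_eq_some_iff.1 hql
    obtain ⟨p', hp'⟩ : ∃ p', Sum.inl x :: p = p' ++ [Sum.inr d] := List.getLast?_eq_some_iff.1 hpl
    have hq'ne : q' ≠ [] := by
      rintro rfl
      simp at hq'
    obtain ⟨q0, z, rfl⟩ : ∃ q0 z, q' = q0 ++ [z] :=
      ⟨_, _, (List.dropLast_append_getLast hq'ne).symm⟩
    have hadj : BipAdj E z (Sum.inr d) := by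
      have := hq.1.2.1
      rw [hq'] at this
      simp only [List.Chain', List.isChain_append, List.isChain_cons] at this
      have := this.2.2.2 z (by simp) (Sum.inr d) (by simp)
      exact this
    obtain ⟨e, rfl⟩ : ∃ e, z = Sum.inl e := by
      cases z <;> simp_all [BipAdj]
    have hye : y ≤ e := hqge e (by rw [hq']; simp)
    have hp2 : IsIncForwardPath E (Sum.inr a :: Sum.inl x :: (p ++ [Sum.inl e])) := by
      have hcons : Sum.inr a :: Sum.inl x :: (p ++ [Sum.inl e]) = (Sum.inr a :: Sum.inl x :: p) ++ [Sum.inl e] := by simp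
      rw [hcons]
      refine ⟨⟨by simp, ?_, ?_⟩, ?_, ?_⟩
      · have hch := hp.1.2.1
        simp only [List.Chain'] at hch ⊢
        rw [List.isChain_append]
        refine ⟨hch, by simp, ?_⟩
        intro s hs t ht
        have hs' : s = Sum.inr d := by
          rw [hp', ← List.cons_append, List.getLast?_append] at hs
          simp at hs
          exact hs.symm
        simp at ht
        subst ht
        subst hs'
        simpa [BipAdj] using hadj
      · rw [List.nodup_append]
        refine ⟨hp.1.2.2, by simp, ?_⟩
        intro s hs t ht hst
        simp only [List.mem_singleton] at ht
        subst ht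
        subst hst
        exact absurd (hc e (by simp only [uVerts, vVerts]; simpa using hs)) (not_lt.2 hye)
      · have h5 := hp.2.1
        simp only [List.Chain', uVerts, List.filterMap_append] at h5 ⊢
        rw [List.isChain_append]
        refine ⟨h5, by simp, ?_⟩
        intro s hs t ht
        have h6 := hc s (List.mem_of_getLast? hs)
        simp at ht
        subst ht
        exact h6.trans_le hye
      · have := hp.2.2
        simpa [uVerts, vVerts, List.Chain'] using this
    have h4 := coreR E hG a x y _ hp2 (by simp) hyE hxy e (by simp [uVerts, vVerts])
    exact absurd h4 (not_lt.2 hye)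

lemma inc_unique {α β : Type*} [LinearOrder α] [LinearOrder β]
    (E : Set (α × β)) (hG : IsPRBG E) (w : α ⊕ β) : ∀ (p q : List (α ⊕ β)) (v : α ⊕ β),
      IsIncForwardPath E p → IsIncForwardPath E q →
      p.head? = some v → q.head? = some v → p.getLast? = some w → q.getLast? = some w →
      p = q := by
  intro p
  induction p with
  | nil => intro q v hp; exact absurd rfl hp.1.1
  | cons a p ih =>
    intro q v hp hq hpv hqv hpw hqw
    simp at hpv
    subst hpv
    obtain ⟨q, rfl⟩ : ∃ q', q = a :: q' := by
      cases q with
      | nil => simp at hqv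
      | cons b q => simp at hqv; exact ⟨q, by rw [hqv]⟩
    cases p with
    | nil =>
      cases q with
      | nil => rfl
      | cons y q =>
        exfalso
        simp only [List.getLast?_singleton, Option.some.injEq] at hpw
        subst hpw
        rw [List.getLast?_cons_cons] at hqw
        exact (List.nodup_cons.1 hq.1.2.2).1 (List.mem_of_getLast? hqw)
    | cons x p =>
      cases q with
      | nil =>
        exfalso
        simp only [List.getLast?_singleton, Option.some.injEq] at hqw
        subst hqw
        rw [List.getLast?_cons_cons] at hpw
        exact (List.nodup_cons.1 hp.1.2.2).1 (List.mem_of_getLast? hpw)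
      | cons y q =>
        rw [List.getLast?_cons_cons] at hpw hqw
        have tail : ∀ l : List (α ⊕ β), l ≠ [] → IsIncForwardPath E (a :: l) →
            IsIncForwardPath E l := by
          intro l hl h
          refine ⟨⟨hl, h.1.2.1.tail, (List.nodup_cons.1 h.1.2.2).2⟩, ?_, ?_⟩
          · have := h.2.1
            cases a with
            | inl a => exact List.IsChain.tail (by simpa [uVerts, List.Chain'] using this : (a :: uVerts l).IsChain _)
            | inr a => simpa [uVerts, List.Chain'] using this
          · have := h.2.2
            cases a with
            | inr a => exact List.IsChain.tail (by simpa [vVerts, List.Chain'] using this : (a :: vVerts l).IsChain _)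
            | inl a => simpa [vVerts, List.Chain'] using this
        have hax : BipAdj E a x := (List.isChain_cons_cons.1 hp.1.2.1).1
        have hay : BipAdj E a y := (List.isChain_cons_cons.1 hq.1.2.1).1
        have hxy : x = y := by
          rcases a with a | a <;> rcases x with x | x <;> rcases y with y | y <;>
            simp only [BipAdj] at hax hay
          · rcases lt_trichotomy x y with h | h | h
            · exact (keyL E hG w a x y p q hp hq hpw hqw h).elim
            · rw [h]
            · exact (keyL E hG w a y x q p hq hp hqw hpw h).elim
          · rcases lt_trichotomy x y with h | h | h
            · exact (keyR E hG w a x y p q hp hq hpw hqw h).elim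
            · rw [h]
            · exact (keyR E hG w a y x q p hq hp hqw hpw h).elim
        subst hxy
        rw [ih (x :: q) x (tail _ (by simp) hp) (tail _ (by simp) hq) (by simp) (by simp) hpw hqw]

lemma bipAdj_symm_aux {α β : Type*} (E : Set (α × β)) (a b : α ⊕ β) (h : BipAdj E a b) :
    BipAdj E b a := by
  rcases a with a | a <;> rcases b with b | b <;> simpa [BipAdj] using h

lemma dec_reverse {α β : Type*} [LinearOrder α] [LinearOrder β]
    (E : Set (α × β)) (p : List (α ⊕ β)) (h : IsDecForwardPath E p) :
    IsIncForwardPath E p.reverse := by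
  refine ⟨⟨by simpa using h.1.1, ?_, by simpa using h.1.2.2⟩, ?_, ?_⟩
  · exact List.isChain_reverse.2 (h.1.2.1.imp fun a b hab => bipAdj_symm_aux E a b hab)
  · have := h.2.1
    simp only [uVerts, List.filterMap_reverse]
    exact List.isChain_reverse.2 this
  · have := h.2.2
    simp only [vVerts, List.filterMap_reverse]
    exact List.isChain_reverse.2 this

/-- In a path-restricted ordered bipartite graph, for any vertices `v` and `w` there is at
most one decreasing forward path from `v` to `w`, and at most one increasing forward path
from `v` to `w`: two forward paths originating at a vertex in the same direction never meet
again after diverging, so `T_r(v)` (resp. `T_l(v)`) is a tree. -/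
theorem prbg_forward_paths_unique {α β : Type*} [LinearOrder α] [LinearOrder β]
    (E : Set (α × β)) (hG : IsPRBG E) (v w : α ⊕ β) :
    (∀ p q : List (α ⊕ β), IsDecForwardPath E p → IsDecForwardPath E q →
      p.head? = some v → q.head? = some v → p.getLast? = some w → q.getLast? = some w →
      p = q) ∧
    (∀ p q : List (α ⊕ β), IsIncForwardPath E p → IsIncForwardPath E q →
      p.head? = some v → q.head? = some v → p.getLast? = some w → q.getLast? = some w →
      p = q) := by
  refine ⟨?_, fun p q hp hq h1 h2 h3 h4 => inc_unique E hG w p q v hp hq h1 h2 h3 h4⟩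
  intro p q hp hq h1 h2 h3 h4
  have := inc_unique E hG v p.reverse q.reverse w (dec_reverse E p hp) (dec_reverse E q hq)
    (by simpa using h3) (by simpa using h4) (by simpa using h1) (by simpa using h2)
  exact List.reverse_injective this
end

section
/- Let G be a path-restricted ordered bipartite graph, let P be a forward path in G, and let w be a vertex of G that does not lie on P. Then at most one edge of G joins w to a vertex of P. -/
open List

theorem prbg_inc_lt {α β : Type*} [LinearOrder α] [LinearOrder β]
    (E : Set (α × β)) (hG : IsPRBG E) (mid : List (α ⊕ β)) (v v' : β) (u : α)
    (hc : List.IsChain (BipAdj E) (Sum.inr v :: (mid ++ [Sum.inr v'])))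
    (hn : (Sum.inr v :: (mid ++ [Sum.inr v']) : List (α ⊕ β)).Nodup)
    (hU : (uVerts mid).Pairwise (· < ·))
    (hV : (v :: (vVerts mid ++ [v'])).Pairwise (· < ·))
    (hu : Sum.inl u ∉ mid) (h1 : (u, v) ∈ E) (h2 : (u, v') ∈ E) : False := by
  obtain _ | ⟨m, mid⟩ := mid
  · simp [BipAdj] at hc
  obtain x | y := m
  swap
  · simp [BipAdj] at hc
  have hux : u ≠ x := by
    rintro rfl; simp at hu
  have hvv : v < v' := by
    rw [List.pairwise_cons] at hV
    exact hV.1 v' (by simp)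
  have eU : uVerts (Sum.inl x :: mid : List (α ⊕ β)) = x :: uVerts mid := by simp [uVerts, List.filterMap_cons]
  have eV : vVerts (Sum.inl x :: mid : List (α ⊕ β)) = vVerts mid := by simp [vVerts, List.filterMap_cons]
  rw [eU] at hU
  rw [eV] at hV
  have hmem : ∀ z ∈ uVerts mid, Sum.inl z ∈ mid := by
    intro z hz
    simp only [uVerts, List.mem_filterMap] at hz
    obtain ⟨a, ha, hz⟩ := hz
    cases a <;> simp_all
  have hxU := (List.pairwise_cons.1 hU).1
  have hvV := (List.pairwise_cons.1 hV).1
  have hV' := List.pairwise_append.1 (List.pairwise_cons.1 hV).2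
  have hunot : (Sum.inl u : α ⊕ β) ∉ (Sum.inr v :: ((Sum.inl x :: mid) ++ [Sum.inr v']) : List (α ⊕ β)) := by
    simpa using hu
  set seg : List (α ⊕ β) := Sum.inr v :: ((Sum.inl x :: mid) ++ [Sum.inr v']) with hseg
  have sU : uVerts seg = x :: uVerts mid := by simp [uVerts, hseg, List.filterMap_cons]
  have sV : vVerts seg = v :: (vVerts mid ++ [v']) := by simp [vVerts, hseg, List.filterMap_cons]
  have lv : ListLeast (vVerts seg) v := by
    rw [sV]
    refine ⟨by simp, ?_⟩
    intro y hy
    rcases List.mem_cons.1 hy with rfl | hy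
    · exact le_rfl
    · exact (hvV y hy).le
  have gv : ListGreatest (vVerts seg) v' := by
    rw [sV]
    refine ⟨by simp, ?_⟩
    intro y hy
    simp only [List.mem_cons, List.mem_append, List.not_mem_nil, or_false] at hy
    rcases hy with rfl | hy | rfl
    · exact hvv.le
    · exact (hV'.2.2 y hy v' (by simp)).le
    · exact le_rfl
  have lx : ListLeast (x :: uVerts mid) x := by
    refine ⟨by simp, ?_⟩
    intro y hy
    rcases List.mem_cons.1 hy with rfl | hy
    · exact le_rfl
    · exact (hxU y hy).le
  rcases lt_or_gt_of_ne hux with hlt | hgt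
  · -- prepend u
    have pU : uVerts (Sum.inl u :: seg) = u :: uVerts seg := by simp [uVerts, List.filterMap_cons]
    have pV : vVerts (Sum.inl u :: seg) = vVerts seg := by simp [vVerts, List.filterMap_cons]
    have hlu : ∀ y ∈ uVerts seg, u < y := by
      intro y hy
      rw [sU] at hy
      exact lt_of_lt_of_le hlt (lx.2 y hy)
    refine hG (Sum.inl u :: seg) ⟨⟨by simp, ?_, ?_⟩, Or.inl ⟨?_, ?_⟩⟩ (Or.inl
      ⟨u, v, v', v, v', ?_, ?_, ?_, ?_, h2, hvv.le, le_rfl, hvv⟩)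
    · exact List.IsChain.cons_cons h1 hc
    · exact List.nodup_cons.2 ⟨hunot, hn⟩
    · rw [pU]
      refine List.isChain_iff_pairwise.2 (List.pairwise_cons.2 ⟨hlu, ?_⟩)
      rw [sU]; exact hU
    · rw [pV, sV]; exact List.isChain_iff_pairwise.2 hV
    · rw [pU]
      refine ⟨by simp, ?_⟩
      intro y hy
      rcases List.mem_cons.1 hy with rfl | hy
      · exact le_rfl
      · exact (hlu y hy).le
    · rwa [pV]
    · rwa [pV]
    · have : internalVerts (Sum.inl u :: seg) = Sum.inr v :: Sum.inl x :: mid := by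
        simp only [internalVerts, hseg, List.drop_one, List.tail_cons]
        rw [← List.cons_append, List.dropLast_concat]
      rw [this]
      refine ⟨by simp [vVerts, List.filterMap_cons], ?_⟩
      intro y hy
      apply lv.2
      rw [sV]
      simp [vVerts, List.filterMap_cons] at hy ⊢
      tauto
  · by_cases hex : ∀ y ∈ uVerts seg, y < u
    · -- append u
      have pU : uVerts (seg ++ [Sum.inl u]) = uVerts seg ++ [u] := by simp [uVerts, List.filterMap_cons]
      have pV : vVerts (seg ++ [Sum.inl u]) = vVerts seg := by simp [vVerts, List.filterMap_cons]
      refine hG (seg ++ [Sum.inl u]) ⟨⟨by simp, ?_, ?_⟩, Or.inl ⟨?_, ?_⟩⟩ (Or.inr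
        ⟨v, x, u, x, u, ?_, ?_, ?_, ?_, h1, hgt.le, le_rfl, hgt⟩)
      · refine List.isChain_append.2 ⟨hc, by simp, ?_⟩
        intro a ha b hb
        have : seg.getLast? = some (Sum.inr v') := by
          rw [hseg, ← List.cons_append, List.getLast?_concat]
        rw [this] at ha
        simp at ha hb
        subst ha hb
        exact h2
      · refine List.nodup_append.2 ⟨hn, by simp, ?_⟩
        intro a ha b hb hab
        simp only [List.mem_singleton] at hb
        subst hab hb
        exact hunot ha
      · rw [pU]
        refine List.isChain_iff_pairwise.2 (List.pairwise_append.2 ⟨?_, by simp, ?_⟩)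
        · rw [sU]; exact hU
        · intro a ha b hb
          simp only [List.mem_singleton] at hb
          subst hb
          exact hex a ha
      · rw [pV, sV]; exact List.isChain_iff_pairwise.2 hV
      · rwa [pV]
      · rw [pU]
        refine ⟨by simp [sU], ?_⟩
        intro y hy
        rcases List.mem_append.1 hy with hy | hy
        · rw [sU] at hy; exact lx.2 y hy
        · simp only [List.mem_singleton] at hy
          subst hy; exact hgt.le
      · rw [pU]
        refine ⟨by simp, ?_⟩
        intro y hy
        rcases List.mem_append.1 hy with hy | hy
        · exact (hex y hy).le
        · simp only [List.mem_singleton] at hy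
          exact hy.le
      · have : internalVerts (seg ++ [Sum.inl u]) = Sum.inl x :: mid ++ [Sum.inr v'] := by
          simp only [internalVerts, hseg, List.drop_one, List.cons_append, List.tail_cons]
          rw [← List.cons_append, List.dropLast_concat]
        rw [this]
        have : uVerts (Sum.inl x :: mid ++ [Sum.inr v'] : List (α ⊕ β)) = x :: uVerts mid := by
          simp [uVerts, List.filterMap_cons]
        rwa [this]
    · push Not at hex
      obtain ⟨z, hz, huz⟩ := hex
      obtain ⟨M, hM, hMax⟩ : ∃ M, M ∈ uVerts seg ∧ ∀ y ∈ uVerts seg, y ≤ M := by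
        have hne : (uVerts seg).toFinset.Nonempty := ⟨z, by simpa using hz⟩
        exact ⟨(uVerts seg).toFinset.max' hne,
          by simpa using (uVerts seg).toFinset.max'_mem hne,
          fun y hy => Finset.le_max' _ _ (by simpa using hy)⟩
      refine hG seg ⟨⟨by simp [hseg], hc, hn⟩, Or.inl ⟨?_, ?_⟩⟩ (Or.inr
        ⟨v, x, M, x, u, lv, ?_, ⟨hM, hMax⟩, ?_, h1, hgt.le, huz.trans (hMax z hz), hgt⟩)
      · rw [sU]; exact List.isChain_iff_pairwise.2 hU
      · rw [sV]; exact List.isChain_iff_pairwise.2 hV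
      · rwa [sU]
      · have : internalVerts seg = Sum.inl x :: mid := by
          simp only [internalVerts, hseg, List.drop_one, List.tail_cons]
          rw [List.dropLast_concat]
        rw [this, eU]
        exact lx

theorem prbg_split {γ : Type*} (ws : List γ) (x y : γ) (hx : x ∈ ws) (hy : y ∈ ws) (hne : x ≠ y) :
    (∃ a m b, ws = a ++ (x :: (m ++ [y])) ++ b) ∨ (∃ a m b, ws = a ++ (y :: (m ++ [x])) ++ b) := by
  obtain ⟨s, t, rfl⟩ := List.append_of_mem hx
  simp only [List.mem_append, List.mem_cons] at hy
  rcases hy with hy | rfl | hy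
  · right
    obtain ⟨s1, s2, rfl⟩ := List.append_of_mem hy
    exact ⟨s1, s2, t, by simp⟩
  · exact absurd rfl hne
  · left
    obtain ⟨s1, s2, rfl⟩ := List.append_of_mem hy
    exact ⟨s, s1, s2, by simp⟩

theorem prbg_inc_seg {α β : Type*} [LinearOrder α] [LinearOrder β]
    (E : Set (α × β)) (hG : IsPRBG E) (a mid b : List (α ⊕ β)) (v v' : β) (u : α)
    (hc : List.IsChain (BipAdj E) (a ++ (Sum.inr v :: (mid ++ [Sum.inr v'])) ++ b))
    (hn : (a ++ (Sum.inr v :: (mid ++ [Sum.inr v'])) ++ b).Nodup)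
    (hU : (uVerts (a ++ (Sum.inr v :: (mid ++ [Sum.inr v'])) ++ b)).Pairwise (· < ·))
    (hV : (vVerts (a ++ (Sum.inr v :: (mid ++ [Sum.inr v'])) ++ b)).Pairwise (· < ·))
    (hu : Sum.inl u ∉ (a ++ (Sum.inr v :: (mid ++ [Sum.inr v'])) ++ b))
    (h1 : (u, v) ∈ E) (h2 : (u, v') ∈ E) : False := by
  have hinf : (Sum.inr v :: (mid ++ [Sum.inr v'])) <:+: (a ++ (Sum.inr v :: (mid ++ [Sum.inr v'])) ++ b) :=
    ⟨a, b, rfl⟩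
  refine prbg_inc_lt E hG mid v v' u (hc.infix hinf) (hn.sublist hinf.sublist) ?_ ?_ ?_ h1 h2
  · have := hU.sublist (hinf.sublist.filterMap Sum.getLeft?)
    simpa [uVerts, List.filterMap_cons] using this
  · have := hV.sublist (hinf.sublist.filterMap Sum.getRight?)
    simpa [vVerts, List.filterMap_cons] using this
  · intro h
    exact hu (by simp [h])

theorem prbg_inc {α β : Type*} [LinearOrder α] [LinearOrder β]
    (E : Set (α × β)) (hG : IsPRBG E) (ws : List (α ⊕ β)) (hP : IsForwardPath E ws)
    (u : α) (hw : Sum.inl u ∉ ws) :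
    ∀ x ∈ ws, ∀ y ∈ ws, BipAdj E (Sum.inl u) x → BipAdj E (Sum.inl u) y → x = y := by
  have sym : ∀ p q, BipAdj E p q → BipAdj E q p := by
    rintro (p | p) (q | q) h <;> simpa [BipAdj] using h
  suffices H : ∀ ws : List (α ⊕ β), List.IsChain (BipAdj E) ws → ws.Nodup →
      (uVerts ws).Pairwise (· < ·) → (vVerts ws).Pairwise (· < ·) → Sum.inl u ∉ ws →
      ∀ x ∈ ws, ∀ y ∈ ws, BipAdj E (Sum.inl u) x → BipAdj E (Sum.inl u) y → x = y by
    obtain ⟨⟨-, hc, hn⟩, ⟨h1, h2⟩ | ⟨h1, h2⟩⟩ := hP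
    · exact H ws hc hn (List.isChain_iff_pairwise.1 h1) (List.isChain_iff_pairwise.1 h2) hw
    · have h1 := List.isChain_iff_pairwise.1 h1
      have h2 := List.isChain_iff_pairwise.1 h2
      have := H ws.reverse (List.isChain_reverse.2 (hc.imp fun p q h => sym _ _ h))
        (List.nodup_reverse.2 hn)
        (by simpa [uVerts, List.filterMap_reverse, List.pairwise_reverse] using h1)
        (by simpa [vVerts, List.filterMap_reverse, List.pairwise_reverse] using h2)
        (by simpa using hw)
      simpa using this
  intro ws hc hn hU hV hu x hx y hy hx' hy'
  by_contra hne
  obtain x | x := x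
  · exact hx'
  obtain y | y := y
  · exact hy'
  rcases prbg_split ws _ _ hx hy hne with ⟨a, m, b, rfl⟩ | ⟨a, m, b, rfl⟩
  · exact prbg_inc_seg E hG a m b x y u hc hn hU hV hu hx' hy'
  · exact prbg_inc_seg E hG a m b y x u hc hn hU hV hu hy' hx'

theorem prbg_uswap {α β : Type*} (l : List (α ⊕ β)) : uVerts (l.map Sum.swap) = vVerts l := by
  induction l with
  | nil => rfl
  | cons a l ih => cases a <;> simp_all [uVerts, vVerts, List.filterMap_cons]

theorem prbg_vswap {α β : Type*} (l : List (α ⊕ β)) : vVerts (l.map Sum.swap) = uVerts l := by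
  induction l with
  | nil => rfl
  | cons a l ih => cases a <;> simp_all [uVerts, vVerts, List.filterMap_cons]

theorem prbg_iswap {α β : Type*} (l : List (α ⊕ β)) :
    internalVerts (l.map Sum.swap) = (internalVerts l).map Sum.swap := by
  simp [internalVerts, List.map_dropLast]

theorem prbg_adjswap {α β : Type*} (E : Set (α × β)) (p q : α ⊕ β) :
    BipAdj (Prod.swap ⁻¹' E) p.swap q.swap ↔ BipAdj E p q := by
  cases p <;> cases q <;> simp [BipAdj]

theorem prbg_fswap {α β : Type*} [LinearOrder α] [LinearOrder β] (E : Set (α × β))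
    (l : List (α ⊕ β)) (h : IsForwardPath E l) :
    IsForwardPath (Prod.swap ⁻¹' E) (l.map Sum.swap) := by
  obtain ⟨⟨h0, hc, hn⟩, h⟩ := h
  refine ⟨⟨by simpa using h0, ?_, hn.map (fun p q h => by simpa using congrArg Sum.swap h)⟩, ?_⟩
  · refine (List.isChain_map _).2 (hc.imp fun p q h => (prbg_adjswap E p q).2 h)
  · rw [prbg_uswap, prbg_vswap]
    exact h.imp And.symm And.symm

theorem prbg_bswap {α β : Type*} [LinearOrder α] [LinearOrder β] (E : Set (α × β))
    (l : List (α ⊕ β)) (h : HasBackEdge E l) :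
    HasBackEdge (Prod.swap ⁻¹' E) (l.map Sum.swap) := by
  unfold HasBackEdge at *
  rw [prbg_iswap, prbg_uswap, prbg_vswap, prbg_uswap, prbg_vswap]
  exact h.symm

theorem prbg_swap {α β : Type*} [LinearOrder α] [LinearOrder β] (E : Set (α × β))
    (h : IsPRBG E) : IsPRBG (Prod.swap ⁻¹' E) := by
  intro l hf hb
  exact h _ (prbg_fswap _ l hf) (prbg_bswap _ l hb)

/-- Let `G` be a path-restricted ordered bipartite graph, `P` a forward path in `G`, and `w`
a vertex of `G` not lying on `P`.  Then at most one edge of `G` joins `w` to a vertex of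
`P`. -/
theorem prbg_at_most_one_edge_to_forward_path {α β : Type*} [LinearOrder α] [LinearOrder β]
    (E : Set (α × β)) (hG : IsPRBG E) (ws : List (α ⊕ β)) (hP : IsForwardPath E ws)
    (w : α ⊕ β) (hw : w ∉ ws) :
    ∀ x ∈ ws, ∀ y ∈ ws, BipAdj E w x → BipAdj E w y → x = y := by
  obtain u | v := w
  · exact prbg_inc E hG ws hP u hw
  · intro x hx y hy hx' hy'
    have hsw : Function.Injective (Sum.swap : α ⊕ β → β ⊕ α) :=
      fun p q h => by simpa using congrArg Sum.swap h
    have := prbg_inc _ (prbg_swap E hG) _ (prbg_fswap E ws hP) v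
      (by
        intro h
        obtain ⟨a, ha, h⟩ := List.mem_map.1 h
        cases a <;> simp_all)
      x.swap (List.mem_map_of_mem hx) y.swap (List.mem_map_of_mem hy)
      ((prbg_adjswap E (Sum.inr v) x).2 hx') ((prbg_adjswap E (Sum.inr v) y).2 hy')
    exact hsw this
end

section
/- Let G be a path-restricted ordered bipartite graph, let v be a vertex of G, and let S be the vertex set of T_r(v). Then every edge of G with both endpoints in S is an edge of T_r(v); consequently the subgraph of G induced by S has exactly |S| − 1 edges. -/
open List

/-- The vertex set of `T_r(v)`: the union of all decreasing forward paths originating at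
`v`. -/
def TrVerts {α β : Type*} [Preorder α] [Preorder β] (E : Set (α × β)) (v : α ⊕ β) :
    Set (α ⊕ β) :=
  {x | ∃ ws : List (α ⊕ β), IsDecForwardPath E ws ∧ ws.head? = some v ∧ x ∈ ws}

section helpers
variable {α β : Type*} [LinearOrder α] [LinearOrder β]

def PP (E : Set (α × β)) (ws : List (α ⊕ β)) : Prop :=
  ws ≠ [] ∧ ws.IsChain (BipAdj E) ∧ ws.Pairwise (fun a b => ¬ a ≤ b)

theorem dec_iff (E : Set (α × β)) (ws : List (α ⊕ β)) : IsDecForwardPath E ws ↔ PP E ws := by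
  unfold IsDecForwardPath IsPathList PP
  have h1 : (uVerts ws).IsChain (· > ·) ↔ ws.Pairwise (fun a b => ∀ x, a = Sum.inl x → ∀ y, b = Sum.inl y → x > y) := by
    rw [List.isChain_iff_pairwise, uVerts, List.pairwise_filterMap]
    simp
  have h2 : (vVerts ws).IsChain (· > ·) ↔ ws.Pairwise (fun a b => ∀ x, a = Sum.inr x → ∀ y, b = Sum.inr y → x > y) := by
    rw [List.isChain_iff_pairwise, vVerts, List.pairwise_filterMap]
    simp
  constructor
  · rintro ⟨⟨a, b, c⟩, d, e⟩
    refine ⟨a, b, ?_⟩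
    replace d := h1.1 d
    replace e := h2.1 e
    refine (d.and e).imp ?_
    rintro (x | x) (y | y) ⟨hx, hy⟩ <;> simp at hx hy ⊢ <;> assumption
  · rintro ⟨a, b, c⟩
    refine ⟨⟨a, b, c.imp ?_⟩, h1.2 (c.imp ?_), h2.2 (c.imp ?_)⟩
    · rintro x y h rfl; exact h le_rfl
    · rintro _ _ h x rfl y rfl; simpa using h
    · rintro _ _ h x rfl y rfl; simpa using h

/-- adjacency and side comparisons -/
theorem adj_symm {E : Set (α × β)} {x y : α ⊕ β} (h : BipAdj E x y) : BipAdj E y x := by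
  rcases x with x | x <;> rcases y with y | y <;> exact h

theorem adj_side {E : Set (α × β)} {x y : α ⊕ β} (h : BipAdj E x y) : x.isLeft = !y.isLeft := by
  rcases x with x | x <;> rcases y with y | y <;> first | rfl | exact h.elim

theorem le_side {x y : α ⊕ β} (h : x ≤ y) : x.isLeft = y.isLeft := by
  rcases x with x | x <;> rcases y with y | y <;> simp at h ⊢

theorem side_total {x y : α ⊕ β} (h : x.isLeft = y.isLeft) : x ≤ y ∨ y ≤ x := by
  rcases x with x | x <;> rcases y with y | y <;> simp at h ⊢ <;> exact le_total _ _

theorem PP.le_head {E : Set (α × β)} {ws : List (α ⊕ β)} (h : PP E ws) {v a : α ⊕ β}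
    (hv : ws.head? = some v) (ha : a ∈ ws) (hs : a.isLeft = v.isLeft) : a ≤ v := by
  rcases ws with _ | ⟨w, t⟩
  · simp at ha
  simp at hv
  subst hv
  rcases List.mem_cons.1 ha with rfl | ha
  · exact le_rfl
  · exact (side_total hs).resolve_right ((List.pairwise_cons.1 h.2.2).1 a ha)

theorem PP.snoc {E : Set (α × β)} {l : List (α ⊕ β)} {p w x : α ⊕ β} (h : PP E (l ++ [p, w]))
    (ha : BipAdj E w x) (hx : x < p) : PP E ((l ++ [p]) ++ [w, x]) := by
  obtain ⟨h0, h1, h2⟩ := h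
  have e : (l ++ [p]) ++ [w, x] = (l ++ [p, w]) ++ [x] := by simp
  rw [e]
  refine ⟨by simp, ?_, ?_⟩
  · rw [List.isChain_append]
    refine ⟨h1, by simp, ?_⟩
    simp [List.getLast?_append]
    exact ha
  · rw [List.pairwise_append]
    refine ⟨h2, by simp, ?_⟩
    rw [List.pairwise_append] at h2
    intro a hm b hb hab
    simp at hb
    subst hb
    simp at hm
    rcases hm with hm | rfl | rfl
    · exact h2.2.2 a hm p (by simp) (hab.trans hx.le)
    · exact absurd hx (not_lt_of_ge hab)
    · have := le_side hab
      have h3 := adj_side ha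
      grind

theorem PP.adj_last {E : Set (α × β)} {l r : List (α ⊕ β)} {p w : α ⊕ β}
    (h : PP E (l ++ p :: w :: r)) : BipAdj E p w := by
  have := h.2.1
  rw [List.isChain_append] at this
  exact (List.isChain_cons_cons.1 this.2.1).1

theorem exists_greatest {γ : Type*} [LinearOrder γ] (l : List γ) (h : l ≠ []) :
    ∃ x, ListGreatest l x := by
  obtain ⟨x, hx, hm⟩ := l.toFinset.exists_max_image id (by simpa using h)
  exact ⟨x, by simpa using hx, by simpa using hm⟩

theorem keyC {E : Set (α × β)} (hG : IsPRBG E) {l : List (α ⊕ β)} {p w x g : α ⊕ β}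
    (h : PP E (l ++ [p, w])) (ha : BipAdj E w x) (hg : g ∈ l ++ [p, w]) (hxg : x ≤ g) :
    ¬ p < x := by
  intro hpx
  have hd := (dec_iff E _).2 h
  have hpw : BipAdj E p w := h.adj_last
  have hl : l ≠ [] := by
    rintro rfl
    simp at hg
    rcases hg with rfl | rfl
    · exact absurd hpx (not_lt_of_ge hxg)
    · have := le_side hxg
      have h3 := adj_side ha
      grind
  apply hG _ ⟨hd.1, Or.inr hd.2⟩
  obtain ⟨v, t, rfl⟩ := List.exists_cons_of_ne_nil hl
  have hi : internalVerts ((v :: t) ++ [p, w]) = t ++ [p] := by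
    have : (v :: t) ++ [p, w] = v :: ((t ++ [p]) ++ [w]) := by simp
    rw [this, internalVerts]
    simp only [List.drop_succ_cons, List.drop_zero, List.dropLast_concat]
  set ws := (v :: t) ++ [p, w] with hws
  have minw : ∀ a ∈ ws, a.isLeft = w.isLeft → w ≤ a := by
    intro a hm hs
    by_cases haw : a = w
    · exact haw.ge
    have e : ws = (v :: t ++ [p]) ++ [w] := by simp [hws]
    rw [e] at hm
    have := h.2.2
    rw [e, List.pairwise_append] at this
    rcases List.mem_append.1 hm with hm | hm
    · exact (side_total hs).resolve_left (this.2.2 a hm w (by simp))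
    · simp at hm; exact absurd hm haw
  have minp : ∀ a ∈ ws, a.isLeft = p.isLeft → p ≤ a := by
    intro a hm hs
    by_cases haw : a = p
    · exact haw.ge
    have := h.2.2
    rw [hws, List.pairwise_append] at this
    rcases List.mem_append.1 hm with hm | hm
    · exact (side_total hs).resolve_left (this.2.2 a hm p (by simp))
    · simp at hm
      rcases hm with rfl | rfl
      · exact absurd rfl haw
      · have h3 := adj_side hpw
        grind
  have hpm : p ∈ ws := by simp [hws]
  have hwm : w ∈ ws := by simp [hws]
  have hsub : ∀ a ∈ t ++ [p], a ∈ ws := by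
    intro a; simp [hws]; tauto
  have hpi : p ∈ t ++ [p] := by simp
  rw [HasBackEdge, hi]
  clear_value ws
  have memu : ∀ (l : List (α ⊕ β)) a, a ∈ uVerts l ↔ Sum.inl a ∈ l := by
    intro l a; simp [uVerts]
  have memv : ∀ (l : List (α ⊕ β)) a, a ∈ vVerts l ↔ Sum.inr a ∈ l := by
    intro l a; simp [vVerts]
  rcases w with w | w <;> rcases p with p | p <;> rcases x with x | x <;>
    first | exact ha.elim | exact hpw.elim | skip
  · left
    rcases g with g | g
    · simp at hxg
    obtain ⟨d, hd⟩ := exists_greatest (vVerts ws) (List.ne_nil_of_mem ((memv ws g).2 hg))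
    refine ⟨w, p, d, p, x, ⟨(memu _ _).2 hwm, fun y hy => ?_⟩, ⟨(memv _ _).2 hpm, fun y hy => ?_⟩, hd,
      ⟨(memv _ _).2 hpi, fun y hy => ?_⟩, ha, ?_, ?_, by simpa using hpx⟩
    · simpa using minw _ ((memu _ _).1 hy) rfl
    · simpa using minp _ ((memv _ _).1 hy) rfl
    · simpa using minp _ (hsub _ ((memv _ _).1 hy)) rfl
    · simpa using hpx.le
    · exact le_trans (by simpa using hxg) (hd.2 g ((memv ws g).2 hg))
  · right
    rcases g with g | g
    swap
    · simp at hxg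
    obtain ⟨d, hd⟩ := exists_greatest (uVerts ws) (List.ne_nil_of_mem ((memu ws g).2 hg))
    refine ⟨w, p, d, p, x, ⟨(memv _ _).2 hwm, fun y hy => ?_⟩, ⟨(memu _ _).2 hpm, fun y hy => ?_⟩, hd,
      ⟨(memu _ _).2 hpi, fun y hy => ?_⟩, ha, ?_, ?_, by simpa using hpx⟩
    · simpa using minw _ ((memv _ _).1 hy) rfl
    · simpa using minp _ ((memu _ _).1 hy) rfl
    · simpa using minp _ (hsub _ ((memu _ _).1 hy)) rfl
    · simpa using hpx.le
    · exact le_trans (by simpa using hxg) (hd.2 g ((memu ws g).2 hg))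

theorem head_mem {ws : List (α ⊕ β)} {v : α ⊕ β} (hv : ws.head? = some v) : v ∈ ws :=
  List.mem_of_mem_head? hv

theorem uniq_aux {E : Set (α × β)} (hG : IsPRBG E) {l l' : List (α ⊕ β)} {p p' w v : α ⊕ β}
    (h : PP E (l ++ [p, w])) (h' : PP E (l' ++ [p', w]))
    (hv : (l ++ [p, w]).head? = some v) (hv' : (l' ++ [p', w]).head? = some v) : ¬ p < p' := by
  intro hlt
  have a1 := h.adj_last
  have a2 := h'.adj_last
  have s1 := adj_side a1
  have s2 := adj_side a2
  by_cases hs : p'.isLeft = v.isLeft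
  · exact keyC hG h (adj_symm a2) (head_mem hv) (h'.le_head hv' (by simp) hs) hlt
  have hlne : l ≠ [] := by
    rintro rfl
    simp at hv
    subst hv
    exact hs (s2.trans s1.symm)
  rcases List.eq_nil_or_concat' l with rfl | ⟨m, q, rfl⟩
  · exact hlne rfl
  have h3 := h'.snoc (adj_symm a1) hlt
  have e : (m ++ [q]) ++ [p, w] = m ++ q :: p :: [w] := by simp
  have a4 : BipAdj E q p := by rw [e] at h; exact h.adj_last
  have s4 := adj_side a4
  have hqw : q.isLeft = w.isLeft := by rw [s4, s1]; simp
  have hqv : q.isLeft = v.isLeft := by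
    rw [hqw]
    rw [s2] at hs
    revert hs
    cases w.isLeft <;> cases v.isLeft <;> simp
  have hql : q ≤ v := h.le_head hv (by simp) hqv
  have hvm : v ∈ (l' ++ [p']) ++ [w, p] := by
    have := head_mem hv'
    simp at this ⊢; tauto
  refine keyC hG h3 (adj_symm a4) hvm hql ?_
  have hp := h.2.2
  rw [List.pairwise_append] at hp
  have hn : ¬ q ≤ w := hp.2.2 q (by simp) w (by simp)
  exact lt_of_le_not_ge ((side_total hqw).resolve_left hn) hn

theorem uniq {E : Set (α × β)} (hG : IsPRBG E) {l l' : List (α ⊕ β)} {p p' w v : α ⊕ β}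
    (h : PP E (l ++ [p, w])) (h' : PP E (l' ++ [p', w]))
    (hv : (l ++ [p, w]).head? = some v) (hv' : (l' ++ [p', w]).head? = some v) : p = p' := by
  have n1 := uniq_aux hG h h' hv hv'
  have n2 := uniq_aux hG h' h hv' hv
  have s : p.isLeft = p'.isLeft := by rw [adj_side h.adj_last, adj_side h'.adj_last]
  rcases side_total s with h | h
  · exact eq_of_le_of_not_lt h n1
  · exact (eq_of_le_of_not_lt h n2).symm

theorem PP.prefix {E : Set (α × β)} {l r : List (α ⊕ β)} (h : PP E (l ++ r)) (hl : l ≠ []) :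
    PP E l :=
  ⟨hl, (List.isChain_append.1 h.2.1).1, (List.pairwise_append.1 h.2.2).1⟩

theorem mem_Tr {E : Set (α × β)} {v x : α ⊕ β} : x ∈ TrVerts E v ↔
    ∃ ws, PP E ws ∧ ws.head? = some v ∧ x ∈ ws := by
  simp [TrVerts, dec_iff]

theorem end_of_mem {E : Set (α × β)} {v x : α ⊕ β} (hx : x ∈ TrVerts E v) (hne : x ≠ v) :
    ∃ l p, PP E (l ++ [p, x]) ∧ (l ++ [p, x]).head? = some v := by
  obtain ⟨ws, h, hv, hm⟩ := mem_Tr.1 hx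
  obtain ⟨a, b, rfl⟩ := List.append_of_mem hm
  rcases List.eq_nil_or_concat' a with rfl | ⟨l, p, rfl⟩
  · simp at hv; exact absurd hv hne
  refine ⟨l, p, ?_, ?_⟩
  · have e : (l ++ [p]) ++ x :: b = (l ++ [p, x]) ++ b := by simp
    rw [e] at h
    exact h.prefix (by simp)
  · cases l <;> simpa using hv

theorem induced_aux {E : Set (α × β)} (hG : IsPRBG E) {v x y : α ⊕ β} (ha : BipAdj E y x)
    (hx : x ∈ TrVerts E v) (hy : y ∈ TrVerts E v) (hs : x.isLeft = v.isLeft) :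
    ∃ ws, PP E ws ∧ ws.head? = some v ∧ ∃ l, (ws = l ++ [x, y] ∨ ws = l ++ [y, x]) := by
  have hne : y ≠ v := by
    rintro rfl
    have := adj_side ha
    grind
  obtain ⟨l, q, h, hv⟩ := end_of_mem hy hne
  obtain ⟨ws, h2, hv2, hm⟩ := mem_Tr.1 hx
  have hxv := h2.le_head hv2 hm hs
  have hq := keyC hG h ha (head_mem hv) hxv
  have s : x.isLeft = q.isLeft := by
    rw [adj_side h.adj_last, adj_side ha]; simp
  have hxq : x ≤ q := by
    rcases side_total s with h | h
    · exact h
    · exact (eq_of_le_of_not_lt h hq).ge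
  rcases hxq.eq_or_lt with rfl | hlt
  · exact ⟨_, h, hv, l, Or.inl rfl⟩
  · refine ⟨_, h.snoc ha hlt, ?_, l ++ [q], Or.inr rfl⟩
    cases l <;> simpa using hv

theorem induced {E : Set (α × β)} (hG : IsPRBG E) {v x y : α ⊕ β} (ha : BipAdj E x y)
    (hx : x ∈ TrVerts E v) (hy : y ∈ TrVerts E v) :
    ∃ ws, PP E ws ∧ ws.head? = some v ∧ ∃ l, (ws = l ++ [x, y] ∨ ws = l ++ [y, x]) := by
  by_cases hs : x.isLeft = v.isLeft
  · exact induced_aux hG (adj_symm ha) hx hy hs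
  · obtain ⟨ws, h1, h2, l, h3⟩ := induced_aux hG ha hy hx (by
      have := adj_side ha
      rw [this] at hs
      revert hs
      cases y.isLeft <;> cases v.isLeft <;> simp)
    exact ⟨ws, h1, h2, l, h3.symm⟩

theorem ne_head_of_end {E : Set (α × β)} {l : List (α ⊕ β)} {p w v : α ⊕ β}
    (h : PP E (l ++ [p, w])) (hv : (l ++ [p, w]).head? = some v) : w ≠ v := by
  rintro rfl
  have h2 := h.2.2
  have e : l ++ [p, w] = (l ++ [p]) ++ [w] := by simp
  rw [e, List.pairwise_append] at h2
  refine h2.2.2 w ?_ w (by simp) le_rfl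
  cases l with
  | nil => simp at hv; simp [hv]
  | cons a t => simp at hv; simp [hv]

theorem count [Fintype α] [Fintype β] (E : Set (α × β)) (hG : IsPRBG E) (v : α ⊕ β) :
    {e ∈ E | Sum.inl e.1 ∈ TrVerts E v ∧ Sum.inr e.2 ∈ TrVerts E v}.ncard =
      (TrVerts E v).ncard - 1 := by
  classical
  have hvS : v ∈ TrVerts E v := mem_Tr.2 ⟨[v], ⟨by simp, by simp, by simp⟩, rfl, by simp⟩
  rw [← Set.ncard_diff_singleton_of_mem hvS]
  have hpar : ∀ w : α ⊕ β, ∃ p, w ∈ TrVerts E v \ {v} →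
      ∃ l, PP E (l ++ [p, w]) ∧ (l ++ [p, w]).head? = some v := by
    intro w
    by_cases hw : w ∈ TrVerts E v \ {v}
    · obtain ⟨l, p, h⟩ := end_of_mem hw.1 hw.2
      exact ⟨p, fun _ => ⟨l, h⟩⟩
    · exact ⟨w, fun h => absurd h hw⟩
  choose par hpar using hpar
  have key : ∀ l p w, PP E (l ++ [p, w]) → (l ++ [p, w]).head? = some v →
      w ∈ TrVerts E v \ {v} ∧ par w = p := by
    intro l p w h hv
    have hw : w ∈ TrVerts E v \ {v} :=
      ⟨mem_Tr.2 ⟨_, h, hv, by simp⟩, ne_head_of_end h hv⟩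
    obtain ⟨l', h', hv'⟩ := hpar w hw
    exact ⟨hw, uniq hG h' h hv' hv⟩
  have i1 : Set.InjOn (fun e : α × β => s((Sum.inl e.1 : α ⊕ β), Sum.inr e.2))
      {e ∈ E | Sum.inl e.1 ∈ TrVerts E v ∧ Sum.inr e.2 ∈ TrVerts E v} := by
    rintro ⟨a, b⟩ _ ⟨c, d⟩ _ h
    simpa using h
  have i2 : Set.InjOn (fun w : α ⊕ β => s(par w, w)) (TrVerts E v \ {v}) := by
    intro w hw w' hw' h
    simp only [Sym2.eq_iff] at h
    rcases h with h | ⟨h1, h2⟩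
    · exact h.2
    exfalso
    obtain ⟨l, h, hv⟩ := hpar w hw
    rw [h1] at h hv
    rcases List.eq_nil_or_concat' l with rfl | ⟨m, q, rfl⟩
    · simp at hv; exact hw'.2 hv
    have e : (m ++ [q]) ++ [w', w] = (m ++ [q, w']) ++ [w] := by simp
    rw [e] at h hv
    have hq := (key m q w' (h.prefix (by simp)) (by cases m <;> simpa using hv)).2
    have := (List.pairwise_append.1 h.2.2).2.2 q (by simp) w (by simp)
    exact this (by rw [← hq, ← h2])
  rw [← Set.ncard_image_of_injOn i1, ← Set.ncard_image_of_injOn i2]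
  congr 1
  ext z
  constructor
  · rintro ⟨⟨a, b⟩, ⟨hE, ha, hb⟩, rfl⟩
    obtain ⟨ws, h, hv, l, rfl | rfl⟩ := induced hG (x := Sum.inl a) (y := Sum.inr b) hE ha hb
    · obtain ⟨k1, k2⟩ := key _ _ _ h hv
      exact ⟨_, k1, by simp [k2]⟩
    · obtain ⟨k1, k2⟩ := key _ _ _ h hv
      exact ⟨_, k1, by simp [k2]⟩
  · rintro ⟨w, hw, rfl⟩
    obtain ⟨l, h, hv⟩ := hpar w hw
    have a := h.adj_last
    have m1 : par w ∈ TrVerts E v := mem_Tr.2 ⟨_, h, hv, by simp⟩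
    have m2 := hw.1
    change s(par w, w) ∈ _
    generalize par w = p at a m1 ⊢
    rcases p with p | p <;> rcases w with w | w
    · exact a.elim
    · exact ⟨(p, w), ⟨a, m1, m2⟩, rfl⟩
    · exact ⟨(w, p), ⟨a, m2, m1⟩, Sym2.eq_swap⟩
    · exact a.elim

end helpers

/-- Let `G` be a path-restricted ordered bipartite graph, `v` a vertex, and `S` the vertex
set of `T_r(v)`.  Then every edge of `G` with both endpoints in `S` is an edge of `T_r(v)`
(i.e. a consecutive pair on some decreasing forward path from `v`); consequently the
subgraph of `G` induced by `S` has exactly `|S| − 1` edges. -/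
theorem prbg_tree_induced_edges {α β : Type*} [LinearOrder α] [LinearOrder β]
    [Fintype α] [Fintype β] (E : Set (α × β)) (hG : IsPRBG E) (v : α ⊕ β) :
    (∀ u b, (u, b) ∈ E → Sum.inl u ∈ TrVerts E v → Sum.inr b ∈ TrVerts E v →
      ∃ ws : List (α ⊕ β), IsDecForwardPath E ws ∧ ws.head? = some v ∧
        ([Sum.inl u, Sum.inr b] <:+: ws ∨ [Sum.inr b, Sum.inl u] <:+: ws)) ∧
    {e ∈ E | Sum.inl e.1 ∈ TrVerts E v ∧ Sum.inr e.2 ∈ TrVerts E v}.ncard =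
      (TrVerts E v).ncard - 1 := by
  refine ⟨fun u b hE hu hb => ?_, count E hG v⟩
  obtain ⟨ws, h, hv, l, hl⟩ := induced hG (x := Sum.inl u) (y := Sum.inr b) hE hu hb
  refine ⟨ws, (dec_iff E ws).2 h, hv, ?_⟩
  rcases hl with rfl | rfl
  · exact Or.inl (List.suffix_append _ _).isInfix
  · exact Or.inr (List.suffix_append _ _).isInfix
end

section
/- Let G = (U, V, E) be a path-restricted ordered bipartite graph and let v ∈ V. Let P_1 and P_2 be increasing forward paths originating at v whose first edges go to distinct vertices of U. If u_i ∈ U and v_i ∈ V are consecutive vertices on P_1 (the path traversing u_i and then v_i) and u_j ∈ U and v_j ∈ V are consecutive vertices on P_2, then v_i < v_j implies u_j < u_i. In particular, the ranges of any two increasing forward paths in T_l(v) are disjoint apart from the common origin v. -/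
open List

theorem aux_mem_u {α β : Type*} (ws : List (α ⊕ β)) (u : α) : u ∈ uVerts ws ↔ Sum.inl u ∈ ws := by
  unfold uVerts
  rw [List.mem_filterMap]
  constructor
  · rintro ⟨a, ha, h⟩
    cases a with
    | inl x => simp at h; subst h; exact ha
    | inr x => simp at h
  · intro h
    exact ⟨_, h, by simp⟩

theorem aux_mem_v {α β : Type*} (ws : List (α ⊕ β)) (u : β) : u ∈ vVerts ws ↔ Sum.inr u ∈ ws := by
  unfold vVerts
  rw [List.mem_filterMap]
  constructor
  · rintro ⟨a, ha, h⟩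
    cases a with
    | inr x => simp at h; subst h; exact ha
    | inl x => simp at h
  · intro h
    exact ⟨_, h, by simp⟩

theorem aux_greatest {γ : Type*} [LinearOrder γ] (l : List γ) (x : γ) (hx : x ∈ l) :
    ∃ m, ListGreatest l m := by
  obtain ⟨m, hm, h⟩ := l.toFinset.exists_max_image id ⟨x, by simpa using hx⟩
  exact ⟨m, by simpa using hm, fun y hy => h y (by simpa using hy)⟩

theorem aux_form {α β : Type*} (P : List (α ⊕ β)) (v : β) (u ui : α) (vi : β)
    (h : P.head? = some (Sum.inr v)) (h' : P[1]? = some (Sum.inl u))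
    (hi : [Sum.inl ui, Sum.inr vi] <:+: P) :
    ∃ y L, P = Sum.inr v :: Sum.inl u :: y :: L ∧ Sum.inr vi ∈ y :: L := by
  match P, h, h', hi with
  | [], h, _, _ => simp at h
  | [a], _, h', _ => simp at h'
  | [a, b], h, h', hi =>
    simp at h h'
    subst h h'
    simp [List.infix_cons_iff] at hi
  | a :: b :: y :: L, h, h', hi =>
    simp at h h'
    subst h h'
    refine ⟨y, L, rfl, ?_⟩
    rw [List.infix_cons_iff] at hi
    rcases hi with hi | hi
    · simp at hi
    · have := hi.subset (show Sum.inr vi ∈ [Sum.inl ui, Sum.inr vi] by simp)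
      simpa using this

/-- Let `G = (U, V, E)` be a path-restricted ordered bipartite graph, `v ∈ V`, and let `P₁`,
`P₂` be increasing forward paths originating at `v` whose first edges go to distinct
vertices of `U`.  If `uᵢ ∈ U` and `vᵢ ∈ V` are consecutive on `P₁` (traversed in this
order) and `uⱼ ∈ U`, `vⱼ ∈ V` are consecutive on `P₂`, then `vᵢ < vⱼ` implies `uⱼ < uᵢ`;
in particular the ranges of any two increasing forward paths in `T_l(v)` are disjoint apart
from the common origin `v`. -/
theorem prbg_tl_ranges_disjoint {α β : Type*} [LinearOrder α] [LinearOrder β]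
    (E : Set (α × β)) (hG : IsPRBG E) (v : β)
    (P₁ P₂ : List (α ⊕ β)) (h₁ : IsIncForwardPath E P₁) (h₂ : IsIncForwardPath E P₂)
    (hv₁ : P₁.head? = some (Sum.inr v)) (hv₂ : P₂.head? = some (Sum.inr v))
    (u₁ u₂ : α) (hu₁ : P₁[1]? = some (Sum.inl u₁)) (hu₂ : P₂[1]? = some (Sum.inl u₂))
    (hne : u₁ ≠ u₂) :
    ∀ (ui uj : α) (vi vj : β),
      [Sum.inl ui, Sum.inr vi] <:+: P₁ → [Sum.inl uj, Sum.inr vj] <:+: P₂ →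
      vi < vj → uj < ui := by
  intro ui uj vi vj hi hj hlt
  obtain ⟨y₁, L₁, rfl, hvi⟩ := aux_form P₁ v u₁ ui vi hv₁ hu₁ hi
  obtain ⟨y₂, L₂, rfl, hvj⟩ := aux_form P₂ v u₂ uj vj hv₂ hu₂ hj
  have hui := (aux_mem_u _ _).2 (hi.subset (show Sum.inl ui ∈ [Sum.inl ui, Sum.inr vi] by simp))
  have huj := (aux_mem_u _ _).2 (hj.subset (show Sum.inl uj ∈ [Sum.inl uj, Sum.inr vj] by simp))
  have hvj' := (aux_mem_v _ _).2 (hj.subset (show Sum.inr vj ∈ [Sum.inl uj, Sum.inr vj] by simp))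
  obtain ⟨⟨-, hc₁, hn₁⟩, hU₁, hV₁⟩ := h₁
  have h₂' := h₂
  obtain ⟨⟨-, hc₂, hn₂⟩, hU₂, hV₂⟩ := h₂
  have eU : ∀ (u : α) (y : α ⊕ β) L, uVerts (Sum.inr v :: Sum.inl u :: y :: L)
      = u :: uVerts (y :: L) := fun u y L => rfl
  have eV : ∀ (u : α) (y : α ⊕ β) L, vVerts (Sum.inr v :: Sum.inl u :: y :: L)
      = v :: vVerts (y :: L) := fun u y L => rfl
  have pU₁ := List.isChain_iff_pairwise.1 hU₁
  have pV₁ := List.isChain_iff_pairwise.1 hV₁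
  have pU₂ := List.isChain_iff_pairwise.1 hU₂
  have pV₂ := List.isChain_iff_pairwise.1 hV₂
  rw [eU, List.pairwise_cons] at pU₁ pU₂
  rw [eV, List.pairwise_cons] at pV₁ pV₂
  have hE₁ : (u₁, v) ∈ E := by
    have := (List.isChain_cons_cons.1 hc₁).1
    exact this
  have hle : ∀ (u : α) l, (∀ x ∈ l, u < x) → ∀ x ∈ u :: l, u ≤ x := by
    intro u l h x hx
    rcases List.mem_cons.1 hx with rfl | hx
    · exact le_rfl
    · exact (h x hx).le
  have hleV : ∀ x ∈ vVerts (Sum.inr v :: Sum.inl u₂ :: y₂ :: L₂), v ≤ x := by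
    intro x hx
    rw [eV] at hx
    rcases List.mem_cons.1 hx with rfl | hx
    · exact le_rfl
    · exact (pV₂.1 x hx).le
  have hleU : ∀ x ∈ uVerts (Sum.inr v :: Sum.inl u₂ :: y₂ :: L₂), u₂ ≤ x := by
    rw [eU]; exact hle _ _ pU₂.1
  rcases lt_or_gt_of_ne hne with hlt' | hlt'
  · exfalso
    have hc := (List.isChain_cons_cons.1 (List.isChain_cons_cons.1 hc₁).2).1
    obtain ⟨w, rfl⟩ : ∃ w, y₁ = Sum.inr w := by
      cases y₁ with
      | inl a => exact hc.elim
      | inr w => exact ⟨w, rfl⟩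
    have hw : (u₁, w) ∈ E := hc
    have hvw : v < w := pV₁.1 w ((aux_mem_v _ _).2 (by simp))
    have hwi : w ≤ vi := by
      have h2 := pV₁.2
      have e : vVerts ((Sum.inr w : α ⊕ β) :: L₁) = w :: vVerts L₁ := rfl
      have h3 := (aux_mem_v _ _).2 hvi
      rw [e] at h2 h3
      rcases List.mem_cons.1 h3 with rfl | h3
      · exact le_rfl
      · exact ((List.pairwise_cons.1 h2).1 _ h3).le
    obtain ⟨m, hm⟩ := aux_greatest _ _ hvj'
    have eU' : uVerts (Sum.inl u₁ :: Sum.inr v :: Sum.inl u₂ :: y₂ :: L₂)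
      = u₁ :: uVerts (Sum.inr v :: Sum.inl u₂ :: y₂ :: L₂) := rfl
    have hall : ∀ x ∈ uVerts (Sum.inr v :: Sum.inl u₂ :: y₂ :: L₂), u₁ < x :=
      fun x hx => hlt'.trans_le (hleU x hx)
    refine hG (Sum.inl u₁ :: Sum.inr v :: Sum.inl u₂ :: y₂ :: L₂) ⟨⟨by simp, ?_, ?_⟩, Or.inl ⟨?_, hV₂⟩⟩
      (Or.inl ⟨u₁, v, m, v, w, ⟨?_, ?_⟩, ⟨?_, hleV⟩, hm, ⟨?_, ?_⟩, hw, hvw.le, ?_, hvw⟩)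
    · exact List.isChain_cons_cons.2 ⟨hE₁, hc₂⟩
    · refine List.nodup_cons.2 ⟨fun h => ?_, hn₂⟩
      exact lt_irrefl _ (hall _ ((aux_mem_u _ _).2 h))
    · rw [eU']
      exact List.isChain_iff_pairwise.2
        (List.pairwise_cons.2 ⟨hall, List.isChain_iff_pairwise.1 hU₂⟩)
    · exact (aux_mem_u _ _).2 (by simp)
    · rw [eU']; exact hle _ _ hall
    · exact (aux_mem_v _ _).2 (by simp)
    · exact (aux_mem_v _ _).2 (by simp [internalVerts])
    · intro x hx
      apply hleV
      rw [aux_mem_v] at hx ⊢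
      exact List.mem_of_mem_dropLast hx
    · exact hwi.trans (hlt.le.trans (hm.2 _ hvj'))
  · by_contra hcon
    push Not at hcon
    have h1 : u₁ ≤ ui := by
      rw [eU] at hui; exact hle _ _ pU₁.1 _ hui
    obtain ⟨m, hm⟩ := aux_greatest _ _ huj
    refine hG _ ⟨h₂'.1, Or.inl h₂'.2⟩ (Or.inr ⟨v, u₂, m, u₂, u₁, ⟨?_, hleV⟩, ⟨?_, hleU⟩, hm,
      ⟨?_, ?_⟩, hE₁, hlt'.le, (h1.trans hcon).trans (hm.2 _ huj), hlt'⟩)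
    · exact (aux_mem_v _ _).2 (by simp)
    · exact (aux_mem_u _ _).2 (by simp)
    · exact (aux_mem_u _ _).2 (by simp [internalVerts])
    · intro x hx
      apply hleU
      rw [aux_mem_u] at hx ⊢
      exact List.mem_cons_of_mem _ (List.mem_of_mem_dropLast hx)
end

section
/- (Crossing lemma) Let G = (U, V, E) be a path-restricted ordered bipartite graph, and suppose U = U_1 ∪ U_2 and V = V_1 ∪ V_2 are partitions such that every vertex of U_1 is greater than every vertex of U_2 and every vertex of V_1 is greater than every vertex of V_2. (1) If every vertex of U_1 has at least one neighbor in V_1, then the number of edges of G with one endpoint in U_1 and the other in V_2 is at most |U_1| + |V_2|. (2) If every vertex of V_1 has at least one neighbor in U_1, then the number of edges of G with one endpoint in V_1 and the other in U_2 is at most |V_1| + |U_2|. -/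
open List

theorem count_aux {α β : Type*} [LinearOrder α] [LinearOrder β] [Fintype α] [Fintype β]
    (S : Set (α × β)) (A : Finset α) (B : Finset β)
    (hA : ∀ e ∈ S, e.1 ∈ A) (hB : ∀ e ∈ S, e.2 ∈ B)
    (h : ∀ u v u' v', (u, v) ∈ S → (u, v') ∈ S → (u', v) ∈ S → v < v' → u < u' → False) :
    S.ncard ≤ A.card + B.card := by
  classical
  set S1 : Set (α × β) := {e ∈ S | ∀ v', (e.1, v') ∈ S → v' ≤ e.2}
  set S2 : Set (α × β) := {e ∈ S | ∀ u', (u', e.2) ∈ S → u' ≤ e.1}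
  have hsub : S ⊆ S1 ∪ S2 := by
    rintro ⟨u, v⟩ he
    by_contra hc
    simp only [S1, S2, Set.mem_union, Set.mem_ofPred_eq, not_or, not_and, not_forall, not_le] at hc
    obtain ⟨v', h1, h2⟩ := hc.1 he
    obtain ⟨u', h3, h4⟩ := hc.2 he
    exact h u v u' v' he h1 h3 h2 h4
  have h1 : S1.ncard ≤ A.card := by
    rw [← Set.ncard_coe_finset A]
    refine Set.ncard_le_ncard_of_injOn Prod.fst (fun e he => hA e he.1) ?_ (Set.toFinite _)
    rintro ⟨u, v⟩ ⟨he, hm⟩ ⟨u', v'⟩ ⟨he', hm'⟩ hu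
    simp only at hu hm hm'
    subst hu
    rw [le_antisymm (hm' _ he) (hm _ he')]
  have h2 : S2.ncard ≤ B.card := by
    rw [← Set.ncard_coe_finset B]
    refine Set.ncard_le_ncard_of_injOn Prod.snd (fun e he => hB e he.1) ?_ (Set.toFinite _)
    rintro ⟨u, v⟩ ⟨he, hm⟩ ⟨u', v'⟩ ⟨he', hm'⟩ hu
    simp only at hu hm hm'
    subst hu
    rw [le_antisymm (hm' _ he) (hm _ he')]
  calc S.ncard ≤ (S1 ∪ S2).ncard := Set.ncard_le_ncard hsub (Set.toFinite _)
    _ ≤ S1.ncard + S2.ncard := Set.ncard_union_le _ _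
    _ ≤ _ := by omega

theorem prbg_pathU {α β : Type*} [LinearOrder α] [LinearOrder β] {E : Set (α × β)}
    (hG : IsPRBG E) {u u' : α} {v v' w : β} (huu : u < u') (hvv : v < v') (hw : v' ≤ w)
    (h1 : (u, v) ∈ E) (h2 : (u', v) ∈ E) (h3 : (u', w) ∈ E) (h4 : (u, v') ∈ E) : False := by
  have hvw := lt_of_lt_of_le hvv hw
  refine hG [Sum.inl u, Sum.inr v, Sum.inl u', Sum.inr w] ⟨⟨by simp, ?_, ?_⟩, Or.inl ?_⟩
    (Or.inl ⟨u, v, w, v, v', ?_⟩)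
  · simp [List.Chain', BipAdj, h1, h2, h3]
  · simp [huu.ne, hvw.ne]
  · show List.IsChain (· < ·) [u, u'] ∧ List.IsChain (· < ·) [v, w]
    simp [huu, hvw]
  · simp [ListLeast, ListGreatest, internalVerts, uVerts, vVerts, huu.le, hvw.le, h4, hvv.le, hw, hvv]

theorem prbg_pathV {α β : Type*} [LinearOrder α] [LinearOrder β] {E : Set (α × β)}
    (hG : IsPRBG E) {u u' w : α} {v v' : β} (hvv : v < v') (huu : u < u') (hw : u' ≤ w)
    (h1 : (u, v) ∈ E) (h2 : (u, v') ∈ E) (h3 : (w, v') ∈ E) (h4 : (u', v) ∈ E) : False := by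
  have huw := lt_of_lt_of_le huu hw
  refine hG [Sum.inr v, Sum.inl u, Sum.inr v', Sum.inl w] ⟨⟨by simp, ?_, ?_⟩, Or.inl ?_⟩
    (Or.inr ⟨v, u, w, u, u', ?_⟩)
  · simp [List.Chain', BipAdj, h1, h2, h3]
  · simp [hvv.ne, huw.ne]
  · show List.IsChain (· < ·) [u, w] ∧ List.IsChain (· < ·) [v, v']
    simp [hvv, huw]
  · simp [ListLeast, ListGreatest, internalVerts, uVerts, vVerts, huu.le, huw.le, h4, hvv.le, hw, huu]

/-- (Crossing lemma) Let `G = (U, V, E)` be a path-restricted ordered bipartite graph and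
let `U = U₁ ∪ U₂`, `V = V₁ ∪ V₂` be partitions with every vertex of `U₁` greater than every
vertex of `U₂` and every vertex of `V₁` greater than every vertex of `V₂`.
(1) If every vertex of `U₁` has a neighbour in `V₁`, then at most `|U₁| + |V₂|` edges join
`U₁` to `V₂`.  (2) If every vertex of `V₁` has a neighbour in `U₁`, then at most
`|V₁| + |U₂|` edges join `V₁` to `U₂`. -/
theorem prbg_crossing_lemma {α β : Type*} [LinearOrder α] [LinearOrder β]
    [Fintype α] [Fintype β] (E : Set (α × β)) (hG : IsPRBG E)
    (U₁ U₂ : Finset α) (V₁ V₂ : Finset β)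
    (hUcover : U₁ ∪ U₂ = Finset.univ) (hUdisj : Disjoint U₁ U₂)
    (hVcover : V₁ ∪ V₂ = Finset.univ) (hVdisj : Disjoint V₁ V₂)
    (hUlt : ∀ u₁ ∈ U₁, ∀ u₂ ∈ U₂, u₂ < u₁)
    (hVlt : ∀ v₁ ∈ V₁, ∀ v₂ ∈ V₂, v₂ < v₁) :
    ((∀ u ∈ U₁, ∃ v ∈ V₁, (u, v) ∈ E) →
      {e ∈ E | e.1 ∈ U₁ ∧ e.2 ∈ V₂}.ncard ≤ U₁.card + V₂.card) ∧
    ((∀ v ∈ V₁, ∃ u ∈ U₁, (u, v) ∈ E) →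
      {e ∈ E | e.1 ∈ U₂ ∧ e.2 ∈ V₁}.ncard ≤ V₁.card + U₂.card) := by
  constructor
  · intro hN
    refine count_aux _ _ _ (fun e he => he.2.1) (fun e he => he.2.2) ?_
    rintro u v u' v' ⟨h1, hu, hv⟩ ⟨h2, -, hv'⟩ ⟨h3, hu', -⟩ hvv huu
    obtain ⟨w, hw, hE⟩ := hN u' hu'
    exact prbg_pathU hG huu hvv (hVlt w hw v' hv').le h1 h3 hE h2
  · intro hN
    rw [add_comm]
    refine count_aux _ _ _ (fun e he => he.2.1) (fun e he => he.2.2) ?_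
    rintro u v u' v' ⟨h1, hu, hv⟩ ⟨h2, -, hv'⟩ ⟨h3, hu', -⟩ hvv huu
    obtain ⟨w, hw, hE⟩ := hN v' hv'
    exact prbg_pathV hG hvv huu (hUlt w hw u' hu').le h1 h2 hE h3
end

section
/- Let G = (U, V, E) be a path-restricted ordered bipartite graph. Every 3-edge path of G has one endpoint in U and one in V; traversing it starting from its endpoint in V gives vertices a ∈ V, b ∈ U, c ∈ V, d ∈ U with edges ab, bc, cd, and its type is one of four possibilities according to whether a < c or a > c (in the order on V) and whether b < d or b > d (in the order on U). If, for some fixed one of these four types, G contains no 3-edge path of that type, then G is acyclic (contains no cycle). -/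
open List

/-- The bipartite graph with edge set `E` contains a cycle: a closed walk on at least four
distinct vertices. -/
def HasCycle {α β : Type*} (E : Set (α × β)) : Prop :=
  ∃ ws : List (α ⊕ β), 4 ≤ ws.length ∧ ws.Chain' (BipAdj E) ∧ ws.Nodup ∧
    ∃ x y, ws.head? = some x ∧ ws.getLast? = some y ∧ BipAdj E y x

/-- A 3-edge path of type `(s, t)`: vertices `a ∈ V`, `b ∈ U`, `c ∈ V`, `d ∈ U` (distinct)
with edges `ab`, `bc`, `cd`, where `s` records whether `a < c` and `t` whether `b < d`. -/
def HasP3OfType {α β : Type*} [Preorder α] [Preorder β] (E : Set (α × β))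
    (s t : Bool) : Prop :=
  ∃ (a c : β) (b d : α), (b, a) ∈ E ∧ (b, c) ∈ E ∧ (d, c) ∈ E ∧
    (if s then a < c else c < a) ∧ (if t then b < d else d < b)

theorem bipAdj_symm {α β : Type*} (E : Set (α × β)) (x y : α ⊕ β) (h : BipAdj E x y) :
    BipAdj E y x := by
  cases x <;> cases y <;> simpa [BipAdj] using h

theorem cycle_two_nbrs {α β : Type*} (E : Set (α × β)) (ws : List (α ⊕ β))
    (h4 : 4 ≤ ws.length) (hc : ws.IsChain (BipAdj E)) (hn : ws.Nodup)
    (x y : α ⊕ β) (hx : ws.head? = some x) (hy : ws.getLast? = some y)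
    (hyx : BipAdj E y x) (w : α ⊕ β) (hw : w ∈ ws) :
    ∃ p ∈ ws, ∃ q ∈ ws, p ≠ q ∧ BipAdj E w p ∧ BipAdj E w q := by
  have hx0 : ws[0] = x := by
    rw [List.head?_eq_getElem?, List.getElem?_eq_getElem (by omega)] at hx
    exact Option.some.inj hx
  have hy0 : ws[ws.length - 1] = y := by
    rw [List.getLast?_eq_getElem?, List.getElem?_eq_getElem (by omega)] at hy
    exact Option.some.inj hy
  rw [List.isChain_iff_getElem] at hc
  obtain ⟨i, hi, rfl⟩ := List.getElem_of_mem hw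
  have key : ∀ (j k : ℕ) (hj : j < ws.length) (hk : k < ws.length), j ≠ k →
      BipAdj E ws[i] ws[j] → BipAdj E ws[i] ws[k] →
      ∃ p ∈ ws, ∃ q ∈ ws, p ≠ q ∧ BipAdj E ws[i] p ∧ BipAdj E ws[i] q := by
    intro j k hj hk hjk h1 h2
    refine ⟨ws[j], List.getElem_mem hj, ws[k], List.getElem_mem hk, ?_, h1, h2⟩
    intro h
    exact hjk ((List.Nodup.getElem_inj_iff hn).1 h)
  rcases Nat.eq_zero_or_pos i with h0 | h0
  · subst h0
    refine key 1 (ws.length - 1) (by omega) (by omega) (by omega) (hc 0 (by omega)) ?_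
    rw [hx0, hy0]
    exact bipAdj_symm E _ _ hyx
  · obtain ⟨m, rfl⟩ : ∃ m, i = m + 1 := ⟨i - 1, by omega⟩
    have hp := bipAdj_symm E _ _ (hc m (by omega))
    by_cases hl : m + 1 + 1 < ws.length
    · exact key m (m + 1 + 1) (by omega) hl (by omega) hp (hc (m + 1) (by omega))
    · refine key m 0 (by omega) (by omega) (by omega) hp ?_
      have hm : m + 1 = ws.length - 1 := by omega
      simp only [hm, hx0, hy0]
      exact hyx

theorem hasP3_of_cycle {α β : Type*} [LinearOrder α] [LinearOrder β]
    (E : Set (α × β)) (h : HasCycle E) (s t : Bool) : HasP3OfType E s t := by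
  obtain ⟨ws, h4, hc, hn, x, y, hx, hy, hyx⟩ := h
  have N := cycle_two_nbrs E ws h4 hc hn x y hx hy hyx
  have hU : ∃ u, Sum.inl u ∈ ws := by
    have hxm : x ∈ ws := List.mem_of_mem_head? hx
    have hym : y ∈ ws := List.mem_of_mem_getLast? hy
    rcases x with u | v
    · exact ⟨u, hxm⟩
    · rcases y with u | v'
      · exact ⟨u, hym⟩
      · simp [BipAdj] at hyx
  have hfin : {u : α | (Sum.inl u : α ⊕ β) ∈ ws}.Finite :=
    (List.finite_toSet ws).preimage (Sum.inl_injective.injOn)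
  have hb : ∃ b, Sum.inl b ∈ ws ∧ ∀ d, Sum.inl d ∈ ws → d ≠ b →
      (if t then b < d else d < b) := by
    cases t
    · obtain ⟨b, hb, hm⟩ := Set.exists_max_image _ id hfin hU
      exact ⟨b, hb, fun d hd hne => by simpa using lt_of_le_of_ne (hm d hd) hne⟩
    · obtain ⟨b, hb, hm⟩ := Set.exists_min_image _ id hfin hU
      exact ⟨b, hb, fun d hd hne => by simpa using lt_of_le_of_ne (hm d hd) hne.symm⟩
  obtain ⟨b, hbw, hbm⟩ := hb
  have hac : ∃ a c : β, Sum.inr c ∈ ws ∧ (b, a) ∈ E ∧ (b, c) ∈ E ∧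
      (if s then a < c else c < a) := by
    obtain ⟨p, hp, q, hq, hpq, h1, h2⟩ := N _ hbw
    rcases p with p | p
    · simp [BipAdj] at h1
    rcases q with q | q
    · simp [BipAdj] at h2
    have hne : p ≠ q := fun h => hpq (by rw [h])
    rcases lt_or_gt_of_ne hne with hl | hl <;> cases s
    · exact ⟨q, p, hp, h2, h1, by simpa using hl⟩
    · exact ⟨p, q, hq, h1, h2, by simpa using hl⟩
    · exact ⟨p, q, hq, h1, h2, by simpa using hl⟩
    · exact ⟨q, p, hp, h2, h1, by simpa using hl⟩
  obtain ⟨a, c, hcw, hba, hbc, hs⟩ := hac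
  obtain ⟨p, hp, q, hq, hpq, h1, h2⟩ := N _ hcw
  rcases p with p | p
  swap
  · simp [BipAdj] at h1
  rcases q with q | q
  swap
  · simp [BipAdj] at h2
  by_cases hpb : p = b
  · have hqb : q ≠ b := fun h => hpq (by rw [h, hpb])
    exact ⟨a, c, b, q, hba, hbc, h2, hs, hbm q hq hqb⟩
  · exact ⟨a, c, b, p, hba, hbc, h1, hs, hbm p hp hpb⟩

/-- Every 3-edge path of a (bipartite) path-restricted ordered bipartite graph has one
endpoint in `U` and one in `V`; traversing it from its endpoint in `V` gives `a ∈ V`,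
`b ∈ U`, `c ∈ V`, `d ∈ U` with edges `ab`, `bc`, `cd`, and it has one of four types
according to whether `a < c` or `a > c` and whether `b < d` or `b > d`.  If for some fixed
one of these four types `G` contains no 3-edge path of that type, then `G` is acyclic. -/
theorem prbg_forbidden_p3_acyclic {α β : Type*} [LinearOrder α] [LinearOrder β]
    (E : Set (α × β)) (hG : IsPRBG E) :
    (∀ ws : List (α ⊕ β), IsPathList E ws → ws.length = 4 →
      ∃ (a c : β) (b d : α), (b, a) ∈ E ∧ (b, c) ∈ E ∧ (d, c) ∈ E ∧
        (ws = [Sum.inr a, Sum.inl b, Sum.inr c, Sum.inl d] ∨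
          ws = [Sum.inl d, Sum.inr c, Sum.inl b, Sum.inr a]) ∧
        (a < c ∨ c < a) ∧ (b < d ∨ d < b)) ∧
    (∀ s t : Bool, ¬ HasP3OfType E s t → ¬ HasCycle E) := by
  refine ⟨?_, fun s t h hc => h (hasP3_of_cycle E hc s t)⟩
  rintro ws ⟨-, hc, hn⟩ hl
  match ws, hl with
  | [w, x, y, z], _ =>
    have hc' : List.IsChain (BipAdj E) [w, x, y, z] := hc
    simp only [List.isChain_cons_cons, List.isChain_singleton, and_true] at hc'
    obtain ⟨h1, h2, h3⟩ := hc'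
    rcases w with w | w <;> rcases x with x | x <;> simp only [BipAdj] at h1 <;>
      rcases y with y | y <;> simp only [BipAdj] at h2 <;>
      rcases z with z | z <;> simp only [BipAdj] at h3
    · simp at hn
      refine ⟨z, x, y, w, h3, h2, h1, Or.inr rfl, lt_or_gt_of_ne ?_, lt_or_gt_of_ne ?_⟩
      · exact fun h => hn.2 h.symm
      · exact fun h => hn.1 h.symm
    · simp at hn
      exact ⟨w, y, x, z, h1, h2, h3, Or.inl rfl, lt_or_gt_of_ne hn.1, lt_or_gt_of_ne hn.2⟩
end

section
/- Let k ≥ 2 and let G = (U, V, E) be a path-restricted ordered bipartite graph in which every forward path has at most k edges. Then G has at most k·(|U| + |V|) edges. -/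
open List

def DecPath {α β : Type*} [Preorder α] [Preorder β]
    (E : Set (α × β)) (ws : List (α ⊕ β)) : Prop :=
  IsPathList E ws ∧ ((uVerts ws).Chain' (· > ·) ∧ (vVerts ws).Chain' (· > ·))

lemma bipAdj_mono {α β : Type*} {E F : Set (α × β)} (h : E ⊆ F) (x y : α ⊕ β)
    (hxy : BipAdj E x y) : BipAdj F x y := by
  rcases x with x | x <;> rcases y with y | y <;> simp only [BipAdj] at * <;> exact h hxy

lemma decPath_mono {α β : Type*} [Preorder α] [Preorder β] {E F : Set (α × β)} (h : E ⊆ F)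
    {ws : List (α ⊕ β)} (hw : DecPath E ws) : DecPath F ws :=
  ⟨⟨hw.1.1, List.IsChain.imp (fun x y => bipAdj_mono h x y) hw.1.2.1, hw.1.2.2⟩, hw.2⟩

lemma ext_u {α β : Type*} [LinearOrder α] [LinearOrder β] {E : Set (α × β)} {u u' : α} {v : β}
    {r : List (α ⊕ β)} (hw : DecPath E (Sum.inr v :: Sum.inl u :: r)) (hu : u < u')
    (he : (u', v) ∈ E) : DecPath E (Sum.inl u' :: Sum.inr v :: Sum.inl u :: r) := by
  obtain ⟨⟨_, hc, hn⟩, h1, h2⟩ := hw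
  have e1 : uVerts (Sum.inr v :: Sum.inl u :: r) = u :: uVerts r := rfl
  have e2 : uVerts (Sum.inl u' :: Sum.inr v :: Sum.inl u :: r) = u' :: u :: uVerts r := rfl
  have e3 : vVerts (Sum.inl u' :: Sum.inr v :: Sum.inl u :: r)
    = vVerts (Sum.inr v :: Sum.inl u :: r) := rfl
  have hch : (u' :: u :: uVerts r).IsChain (· > ·) :=
    List.isChain_cons_cons.2 ⟨hu, by rw [e1] at h1; exact h1⟩
  refine ⟨⟨by simp, List.isChain_cons_cons.2 ⟨he, hc⟩, List.nodup_cons.2 ⟨?_, hn⟩⟩, ?_, ?_⟩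
  · intro hm
    have hm' : u' ∈ u :: uVerts r := by
      rw [← e1]; exact List.mem_filterMap.2 ⟨_, hm, rfl⟩
    have := (List.pairwise_cons.1 (List.isChain_iff_pairwise.1 hch)).1 u' hm'
    exact lt_irrefl _ this
  · rw [e2]; exact hch
  · rw [e3]; exact h2

lemma ext_v {α β : Type*} [LinearOrder α] [LinearOrder β] {E : Set (α × β)} {u : α} {v v' : β}
    {r : List (α ⊕ β)} (hw : DecPath E (Sum.inl u :: Sum.inr v :: r)) (hv : v < v')
    (he : (u, v') ∈ E) : DecPath E (Sum.inr v' :: Sum.inl u :: Sum.inr v :: r) := by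
  obtain ⟨⟨_, hc, hn⟩, h1, h2⟩ := hw
  have e1 : vVerts (Sum.inl u :: Sum.inr v :: r) = v :: vVerts r := rfl
  have e2 : vVerts (Sum.inr v' :: Sum.inl u :: Sum.inr v :: r) = v' :: v :: vVerts r := rfl
  have e3 : uVerts (Sum.inr v' :: Sum.inl u :: Sum.inr v :: r)
    = uVerts (Sum.inl u :: Sum.inr v :: r) := rfl
  have hch : (v' :: v :: vVerts r).IsChain (· > ·) :=
    List.isChain_cons_cons.2 ⟨hv, by rw [e1] at h2; exact h2⟩
  refine ⟨⟨by simp, List.isChain_cons_cons.2 ⟨he, hc⟩, List.nodup_cons.2 ⟨?_, hn⟩⟩, ?_, ?_⟩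
  · intro hm
    have hm' : v' ∈ v :: vVerts r := by
      rw [← e1]; exact List.mem_filterMap.2 ⟨_, hm, rfl⟩
    have := (List.pairwise_cons.1 (List.isChain_iff_pairwise.1 hch)).1 v' hm'
    exact lt_irrefl _ this
  · rw [e3]; exact h1
  · rw [e2]; exact hch

/-- Induction on `k`: removing the largest edge at every vertex shortens all paths. -/
lemma dec_bound {α β : Type*} [LinearOrder α] [LinearOrder β] [Fintype α] [Fintype β] (k : ℕ) :
    ∀ E : Set (α × β), (∀ ws : List (α ⊕ β), DecPath E ws → ws.length ≤ k + 1) →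
      E.ncard ≤ k * (Fintype.card α + Fintype.card β) := by
  induction k with
  | zero =>
    intro E h
    have : E = ∅ := by
      rw [Set.eq_empty_iff_forall_notMem]
      rintro ⟨u, v⟩ he
      have := h [Sum.inl u, Sum.inr v] ⟨⟨by simp, List.isChain_cons_cons.2 ⟨he, by simp⟩, by simp⟩,
        List.isChain_singleton u, List.isChain_singleton v⟩
      simp at this
    simp [this]
  | succ k ih =>
    intro E h
    let A : Set (α × β) := {p | p ∈ E ∧ ∀ u', p.1 < u' → (u', p.2) ∉ E}
    let B : Set (α × β) := {p | p ∈ E ∧ ∀ v', p.2 < v' → (p.1, v') ∉ E}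
    have hA : A.ncard ≤ Fintype.card β := by
      rw [← Nat.card_eq_fintype_card, ← Set.ncard_univ]
      refine Set.ncard_le_ncard_of_injOn Prod.snd (by simp) ?_ (Set.toFinite _)
      rintro ⟨u, v⟩ ⟨h1, h2⟩ ⟨u', v'⟩ ⟨h3, h4⟩ (rfl : v = v')
      rcases lt_trichotomy u u' with hlt | rfl | hlt
      · exact absurd h3 (h2 u' hlt)
      · rfl
      · exact absurd h1 (h4 u hlt)
    have hB : B.ncard ≤ Fintype.card α := by
      rw [← Nat.card_eq_fintype_card, ← Set.ncard_univ]
      refine Set.ncard_le_ncard_of_injOn Prod.fst (by simp) ?_ (Set.toFinite _)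
      rintro ⟨u, v⟩ ⟨h1, h2⟩ ⟨u', v'⟩ ⟨h3, h4⟩ (rfl : u = u')
      rcases lt_trichotomy v v' with hlt | rfl | hlt
      · exact absurd h3 (h2 v' hlt)
      · rfl
      · exact absurd h1 (h4 v hlt)
    have hE : (E \ (A ∪ B)).ncard ≤ k * (Fintype.card α + Fintype.card β) := by
      apply ih
      intro ws hw
      have hw' : DecPath E ws := decPath_mono Set.diff_subset hw
      have key : ∀ u v, (u, v) ∈ E \ (A ∪ B) →
          (∃ u', u < u' ∧ (u', v) ∈ E) ∧ (∃ v', v < v' ∧ (u, v') ∈ E) := by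
        rintro u v ⟨he, hn⟩
        constructor
        · by_contra! hc
          exact hn (Or.inl ⟨he, hc⟩)
        · by_contra! hc
          exact hn (Or.inr ⟨he, hc⟩)
      match ws, hw, hw' with
      | [], _, _ => simp
      | [_], _, _ => simp
      | Sum.inl _ :: Sum.inl _ :: _, hw, _ => exact (List.isChain_cons_cons.1 hw.1.2.1).1.elim
      | Sum.inr _ :: Sum.inr _ :: _, hw, _ => exact (List.isChain_cons_cons.1 hw.1.2.1).1.elim
      | Sum.inl u :: Sum.inr v :: r, hw, hw' =>
        obtain ⟨v', hv, he⟩ := (key u v (List.isChain_cons_cons.1 hw.1.2.1).1).2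
        have := h _ (ext_v hw' hv he)
        simp only [List.length_cons] at *
        omega
      | Sum.inr v :: Sum.inl u :: r, hw, hw' =>
        obtain ⟨u', hu, he⟩ := (key u v (List.isChain_cons_cons.1 hw.1.2.1).1).1
        have := h _ (ext_u hw' hu he)
        simp only [List.length_cons] at *
        omega
    have h1 := Set.ncard_le_ncard_diff_add_ncard E (A ∪ B) (Set.toFinite _)
    have h2 := Set.ncard_union_le A B
    rw [Nat.add_mul, one_mul]
    omega

/-- Let `k ≥ 2` and let `G = (U, V, E)` be a path-restricted ordered bipartite graph in
which every forward path has at most `k` edges (i.e. at most `k + 1` vertices).  Then `G`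
has at most `k·(|U| + |V|)` edges. -/
theorem prbg_bounded_path_length_edges {α β : Type*} [LinearOrder α] [LinearOrder β]
    [Fintype α] [Fintype β] (E : Set (α × β)) (hG : IsPRBG E) (k : ℕ) (hk : 2 ≤ k)
    (hpath : ∀ ws : List (α ⊕ β), IsForwardPath E ws → ws.length ≤ k + 1) :
    E.ncard ≤ k * (Fintype.card α + Fintype.card β) := by
  exact dec_bound k E fun ws hw => hpath ws ⟨hw.1, Or.inr hw.2⟩
end
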